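/- arXiv:2501.00667 — 3 statements merged into one kernel-verified Lean document; each statement's English description precedes it below -/
import Mathlib

section
/- Let P ⊂ ℝ² be a rational convex polygon such that the number of lattice points on the boundary of tP equals t times the number of lattice points on the boundary of P for every positive integer t (in particular, this holds whenever P is pseudointegral). Then every edge of P is reticular: for each one-dimensional exposed face E of P, the affine span of E contains a point of ℤ². -/
open Set Pointwise

/-- The set of lattice points of the plane. -/
def latticePts : Set (ℝ × ℝ) := {p | ∃ m n : ℤ, p = ((m : ℝ), (n : ℝ))}

/-- The coercion of a rational point of the plane to a real point. -/
def qpt (v : ℚ × ℚ) : ℝ × ℝ := ((v.1 : ℝ), (v.2 : ℝ))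

/-- The Ehrhart function of a set `P ⊆ ℝ²`:  `t ↦ #(tP ∩ ℤ²)`. -/
noncomputable def ehr (P : Set (ℝ × ℝ)) (t : ℕ) : ℕ :=
  (((t : ℝ) • P) ∩ latticePts).ncard

/-- A set `P ⊆ ℝ²` is pseudointegral (a PIP) if its Ehrhart function agrees with
a polynomial at all positive integers. -/
def IsPIP (P : Set (ℝ × ℝ)) : Prop :=
  ∃ c : Polynomial ℚ, ∀ t : ℕ, 0 < t → (ehr P t : ℚ) = c.eval (t : ℚ)

/-- A rational triangle: the convex hull of three non-collinear rational points. -/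
def IsRatTriangle (T : Set (ℝ × ℝ)) : Prop :=
  ∃ p q r : ℚ × ℚ, ¬ Collinear ℝ ({qpt p, qpt q, qpt r} : Set (ℝ × ℝ)) ∧
    T = convexHull ℝ {qpt p, qpt q, qpt r}

/-- A rational convex polygon: the convex hull of a finite set of rational
points, with nonempty interior in ℝ². -/
def IsRatPolygon (P : Set (ℝ × ℝ)) : Prop :=
  ∃ V : Finset (ℚ × ℚ), P = convexHull ℝ (qpt '' (V : Set (ℚ × ℚ))) ∧
    (interior P).Nonempty

/-- An edge of `P`: a one-dimensional exposed face of `P`. -/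
def IsEdge (P E : Set (ℝ × ℝ)) : Prop :=
  IsExposed ℝ P E ∧ Module.finrank ℝ (vectorSpan ℝ E) = 1

lemma lat_add {x y : ℝ × ℝ} (hx : x ∈ latticePts) (hy : y ∈ latticePts) : x + y ∈ latticePts := by
  obtain ⟨a, b, rfl⟩ := hx
  obtain ⟨c, d, rfl⟩ := hy
  exact ⟨a + c, b + d, by simp⟩

lemma lat_sub {x y : ℝ × ℝ} (hx : x ∈ latticePts) (hy : y ∈ latticePts) : x - y ∈ latticePts := by
  obtain ⟨a, b, rfl⟩ := hx
  obtain ⟨c, d, rfl⟩ := hy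
  exact ⟨a - c, b - d, by simp⟩

lemma lat_smul {x : ℝ × ℝ} (j : ℤ) (hx : x ∈ latticePts) : (j : ℝ) • x ∈ latticePts := by
  obtain ⟨a, b, rfl⟩ := hx
  exact ⟨j * a, j * b, by simp⟩

lemma lat_finite {B : Set (ℝ × ℝ)} (hB : Bornology.IsBounded B) : (B ∩ latticePts).Finite := by
  obtain ⟨C, hC⟩ := hB.exists_norm_le
  obtain ⟨K, hK⟩ := exists_nat_ge C
  refine (((Set.finite_Icc (-(K : ℤ)) K).prod (Set.finite_Icc (-(K : ℤ)) K)).image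
    (fun m : ℤ × ℤ => ((m.1 : ℝ), (m.2 : ℝ)))).subset ?_
  rintro x ⟨hx, m, n, rfl⟩
  have h := (hC _ hx).trans hK
  rw [Prod.norm_def, max_le_iff] at h
  simp only [Real.norm_eq_abs, abs_le] at h
  refine ⟨(m, n), ⟨⟨?_, ?_⟩, ?_, ?_⟩, rfl⟩
  · exact_mod_cast h.1.1
  · exact_mod_cast h.1.2
  · exact_mod_cast h.2.1
  · exact_mod_cast h.2.2

lemma common_denom (V : Finset (ℚ × ℚ)) :
    ∃ D : ℕ, 0 < D ∧ ∀ v ∈ qpt '' (V : Set (ℚ × ℚ)), (D : ℝ) • v ∈ latticePts := by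
  classical
  refine ⟨∏ v ∈ V, (v.1.den * v.2.den), Finset.prod_pos fun v _ => by
    have := v.1.den_pos; have := v.2.den_pos; positivity, ?_⟩
  rintro _ ⟨v, hv, rfl⟩
  obtain ⟨e, he⟩ := Finset.dvd_prod_of_mem (fun v : ℚ × ℚ => v.1.den * v.2.den) hv
  rw [he]
  have h1 : (v.1 : ℝ) * v.1.den = v.1.num := by exact_mod_cast Rat.mul_den_eq_num v.1
  have h2 : (v.2 : ℝ) * v.2.den = v.2.num := by exact_mod_cast Rat.mul_den_eq_num v.2
  refine ⟨v.1.num * v.2.den * e, v.2.num * v.1.den * e, ?_⟩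
  simp only [qpt, Prod.smul_mk, smul_eq_mul, Prod.mk.injEq]
  push_cast
  rw [← h1, ← h2]
  constructor <;> ring

lemma lex_convex (α β M γ δ K : ℝ) :
    Convex ℝ {z : ℝ × ℝ | α * z.1 + β * z.2 < M ∨
      (α * z.1 + β * z.2 = M ∧ γ * z.1 + δ * z.2 ≤ K)} := by
  intro x hx y hy a b ha hb hab
  simp only [Set.mem_setOf_eq, Prod.fst_add, Prod.snd_add, Prod.smul_fst, Prod.smul_snd,
    smul_eq_mul] at *
  have e1 : α * (a * x.1 + b * y.1) + β * (a * x.2 + b * y.2) =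
    a * (α * x.1 + β * x.2) + b * (α * y.1 + β * y.2) := by ring
  have e2 : γ * (a * x.1 + b * y.1) + δ * (a * x.2 + b * y.2) =
    a * (γ * x.1 + δ * x.2) + b * (γ * y.1 + δ * y.2) := by ring
  rw [e1, e2]
  generalize α * x.1 + β * x.2 = X at *
  generalize α * y.1 + β * y.2 = Y at *
  generalize γ * x.1 + δ * x.2 = X' at *
  generalize γ * y.1 + δ * y.2 = Y' at *
  obtain rfl : b = 1 - a := by linarith
  rcases eq_or_lt_of_le ha with rfl | ha
  · simpa using hy
  rcases eq_or_lt_of_le hb with hb0 | hb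
  · obtain rfl : a = 1 := by linarith
    simpa using hx
  rcases hx with hx | ⟨rfl, hx⟩
  · left
    have : Y ≤ M := by rcases hy with h | h <;> [exact h.le; exact h.1.le]
    nlinarith
  · rcases hy with hy | ⟨rfl, hy⟩
    · left; nlinarith
    · right
      constructor
      · ring
      · nlinarith

/-- the face of `P` in direction `(α, β)` is `[p,q]`. -/
def FaceSeg (P : Set (ℝ × ℝ)) (p q : ℝ × ℝ) : Prop :=
  ∃ α β M : ℝ, (α ≠ 0 ∨ β ≠ 0) ∧ (∀ z ∈ P, α * z.1 + β * z.2 ≤ M) ∧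
    ∀ z ∈ P, (α * z.1 + β * z.2 = M ↔ z ∈ segment ℝ p q)

lemma coords_eq {α β : ℝ} (h : α ≠ 0 ∨ β ≠ 0) {z w : ℝ × ℝ}
    (h1 : α * z.1 + β * z.2 = α * w.1 + β * w.2)
    (h2 : -β * z.1 + α * z.2 = -β * w.1 + α * w.2) : z = w := by
  have hp : α ^ 2 + β ^ 2 ≠ 0 := by
    intro h0
    have : α = 0 := by nlinarith [sq_nonneg α, sq_nonneg β]
    have : β = 0 := by nlinarith [sq_nonneg α, sq_nonneg β]
    tauto
  ext
  · apply mul_left_cancel₀ hp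
    linear_combination α * h1 - β * h2
  · apply mul_left_cancel₀ hp
    linear_combination β * h1 + α * h2

lemma exists_face (V : Set (ℝ × ℝ)) (hV : V.Finite) (α β M : ℝ) (h : α ≠ 0 ∨ β ≠ 0)
    (hM : ∀ z ∈ convexHull ℝ V, α * z.1 + β * z.2 ≤ M)
    (x : ℝ × ℝ) (hx : x ∈ convexHull ℝ V) (hxM : α * x.1 + β * x.2 = M) :
    ∃ p ∈ V, ∃ q ∈ V, ∀ z ∈ convexHull ℝ V,
      (α * z.1 + β * z.2 = M ↔ z ∈ segment ℝ p q) := by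
  set W := {v ∈ V | α * v.1 + β * v.2 = M} with hW
  have hWf : W.Finite := hV.subset (Set.sep_subset _ _)
  have hsub := subset_convexHull ℝ V
  have key : ∀ γ δ K : ℝ, (∀ w ∈ W, γ * w.1 + δ * w.2 ≤ K) → ∀ z ∈ convexHull ℝ V,
      α * z.1 + β * z.2 = M → γ * z.1 + δ * z.2 ≤ K := by
    intro γ δ K hK z hz hzM
    have : convexHull ℝ V ⊆ _ := convexHull_min (fun v hv => by
      rcases (hM v (hsub hv)).lt_or_eq with h | h
      · exact Or.inl h
      · exact Or.inr ⟨h, hK v ⟨hv, h⟩⟩) (lex_convex α β M γ δ K)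
    rcases this hz with h | h
    · linarith
    · exact h.2
  have hWne : W.Nonempty := by
    by_contra hne
    rw [Set.not_nonempty_iff_eq_empty] at hne
    have := key 0 0 (-1) (by simp [hne]) x hx hxM
    norm_num at this
  obtain ⟨p, hp, hpm⟩ := Set.exists_min_image W (fun z => -β * z.1 + α * z.2) hWf hWne
  obtain ⟨q, hq, hqm⟩ := Set.exists_max_image W (fun z => -β * z.1 + α * z.2) hWf hWne
  refine ⟨p, hp.1, q, hq.1, fun z hz => ⟨fun hzM => ?_, fun hzs => ?_⟩⟩
  · have h1 := key (-β) α _ hqm z hz hzM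
    have h2 := key β (-α) (-(-β * p.1 + α * p.2)) (fun w hw => by
      have := hpm w hw
      linarith) z hz hzM
    have h2' : -β * p.1 + α * p.2 ≤ -β * z.1 + α * z.2 := by linarith
    have hpM := hp.2
    have hqM := hq.2
    rw [segment_eq_image']
    by_cases hd : -β * q.1 + α * q.2 - (-β * p.1 + α * p.2) = 0
    · refine ⟨0, by simp, ?_⟩
      apply coords_eq h <;> simp <;> linarith
    · have hd' : 0 < -β * q.1 + α * q.2 - (-β * p.1 + α * p.2) :=
        lt_of_le_of_ne (by linarith) (Ne.symm hd)
      set s := (-β * z.1 + α * z.2 - (-β * p.1 + α * p.2)) /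
        (-β * q.1 + α * q.2 - (-β * p.1 + α * p.2)) with hs
      have hs' : s * (-β * q.1 + α * q.2 - (-β * p.1 + α * p.2)) =
        -β * z.1 + α * z.2 - (-β * p.1 + α * p.2) := div_mul_cancel₀ _ hd
      refine ⟨s, ⟨div_nonneg (by linarith) hd'.le, (div_le_one hd').2 (by linarith)⟩, ?_⟩
      apply coords_eq h
      · simp
        linear_combination (1 - s) * hpM + s * hqM - hzM
      · simp
        linear_combination hs'
  · obtain ⟨a, b, ha, hb, hab, rfl⟩ := hzs
    have hpM := hp.2
    have hqM := hq.2
    simp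
    linear_combination a * hpM + b * hqM + M * hab

lemma support_of_frontier {P : Set (ℝ × ℝ)} (hc : Convex ℝ P) (hi : (interior P).Nonempty)
    {x : ℝ × ℝ} (hx : x ∈ frontier P) :
    ∃ α β : ℝ, (α ≠ 0 ∨ β ≠ 0) ∧ ∀ z ∈ P, α * z.1 + β * z.2 ≤ α * x.1 + β * x.2 := by
  obtain ⟨f, hf⟩ := geometric_hahn_banach_open_point hc.interior isOpen_interior hx.2
  have hfe : ∀ z : ℝ × ℝ, f z = f (1, 0) * z.1 + f (0, 1) * z.2 := by
    intro z
    have : z = z.1 • ((1, 0) : ℝ × ℝ) + z.2 • ((0, 1) : ℝ × ℝ) := by ext <;> simp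
    conv_lhs => rw [this]
    rw [map_add, map_smul, map_smul]
    simp [mul_comm]
  refine ⟨f (1, 0), f (0, 1), ?_, ?_⟩
  · by_contra hcon
    push Not at hcon
    obtain ⟨y, hy⟩ := hi
    have := hf y hy
    rw [hfe y, hfe x, hcon.1, hcon.2] at this
    simp at this
  · intro z hz
    rw [← hfe, ← hfe]
    have hz' : z ∈ closure (interior P) := by
      rw [hc.closure_interior_eq_closure_of_nonempty_interior hi]
      exact subset_closure hz
    have : closure (interior P) ⊆ {z | f z ≤ f x} :=
      closure_minimal (fun a ha => (hf a ha).le) (isClosed_le f.continuous continuous_const)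
    exact this hz'

lemma frontier_of_support {P : Set (ℝ × ℝ)} {x : ℝ × ℝ} (hx : x ∈ P) {α β : ℝ}
    (h : α ≠ 0 ∨ β ≠ 0) (hs : ∀ z ∈ P, α * z.1 + β * z.2 ≤ α * x.1 + β * x.2) :
    x ∈ frontier P := by
  refine ⟨subset_closure hx, fun hxi => ?_⟩
  have hcont : Continuous (fun e : ℝ => x + e • ((α, β) : ℝ × ℝ)) := by fun_prop
  have hn : (fun e : ℝ => x + e • ((α, β) : ℝ × ℝ)) ⁻¹' (interior P) ∈ nhds (0 : ℝ) := by
    apply hcont.continuousAt.preimage_mem_nhds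
    apply isOpen_interior.mem_nhds
    simpa using hxi
  obtain ⟨ε, hε, hb⟩ := Metric.mem_nhds_iff.1 hn
  have hm : (ε / 2) ∈ Metric.ball (0 : ℝ) ε := by
    rw [Metric.mem_ball, Real.dist_eq, sub_zero, abs_of_pos (by linarith)]
    linarith
  have := hs _ (interior_subset (hb hm))
  simp at this
  have hp : 0 < α ^ 2 + β ^ 2 := by
    rcases h with h | h
    · have := sq_nonneg β; positivity
    · have := sq_nonneg α; positivity
  nlinarith [mul_pos hε hp]

/-- `y` is in the relative interior of `τ[p,q]`. -/
def OS (τ : ℝ) (p q y : ℝ × ℝ) : Prop := ∃ c : ℝ, 0 < c ∧ c < τ ∧ y = τ • p + c • (q - p)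

lemma face_subset {P : Set (ℝ × ℝ)} {p q p' q' : ℝ × ℝ}
    (hp' : p' ∈ P) (hq' : q' ∈ P)
    (hF : FaceSeg P p q) {y : ℝ × ℝ} (hyP : y ∈ P) (hy : y ∈ segment ℝ p q)
    (hy' : y ∈ openSegment ℝ p' q') : segment ℝ p' q' ⊆ segment ℝ p q := by
  obtain ⟨α, β, M, h, hM, hf⟩ := hF
  have hyM := (hf y hyP).2 hy
  obtain ⟨a, b, ha, hb, hab, rfl⟩ := hy'
  simp at hyM
  have h1 := hM p' hp'
  have h2 := hM q' hq'
  have e : a * (α * p'.1 + β * p'.2) + b * (α * q'.1 + β * q'.2) = M := by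
    linear_combination hyM
  obtain rfl : b = 1 - a := by linarith
  apply (convex_segment p q).segment_subset
  · exact (hf p' hp').1 (le_antisymm h1 (by nlinarith))
  · exact (hf q' hq').1 (le_antisymm h2 (by nlinarith))

lemma OS.mem {τ : ℝ} {p q y : ℝ × ℝ} (h : OS τ p q y) : τ⁻¹ • y ∈ openSegment ℝ p q := by
  obtain ⟨c, hc, hct, rfl⟩ := h
  have hτ : 0 < τ := hc.trans hct
  rw [openSegment_eq_image']
  refine ⟨c / τ, ⟨div_pos hc hτ, (div_lt_one hτ).2 hct⟩, ?_⟩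
  simp only [smul_add, smul_smul]
  rw [inv_mul_cancel₀ hτ.ne', one_smul, div_eq_inv_mul]

lemma seg_eq {P : Set (ℝ × ℝ)} (hc : Convex ℝ P) {p q p' q' : ℝ × ℝ}
    (hp : p ∈ P) (hq : q ∈ P) (hp' : p' ∈ P) (hq' : q' ∈ P)
    (hF : FaceSeg P p q) (hF' : FaceSeg P p' q') {τ : ℝ} {y : ℝ × ℝ} (hy : OS τ p q y)
    (hy' : OS τ p' q' y) : segment ℝ p q = segment ℝ p' q' := by
  have h1 := hy.mem
  have h2 := hy'.mem
  have h3 := openSegment_subset_segment ℝ _ _ h1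
  have h4 := openSegment_subset_segment ℝ _ _ h2
  have hP := hc.segment_subset hp hq h3
  exact (face_subset hp hq hF' hP h4 h1).antisymm (face_subset hp' hq' hF hP h3 h2)

lemma OS.frontier {P : Set (ℝ × ℝ)} (hc : Convex ℝ P) {p q : ℝ × ℝ}
    (hp : p ∈ P) (hq : q ∈ P) (hF : FaceSeg P p q) {τ : ℝ} {y : ℝ × ℝ} (hy : OS τ p q y) :
    y ∈ τ • frontier P := by
  have h1 := openSegment_subset_segment ℝ _ _ hy.mem
  have hP := hc.segment_subset hp hq h1
  obtain ⟨α, β, M, h, hM, hf⟩ := hF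
  have := (hf _ hP).2 h1
  obtain ⟨c, hc, hct, -⟩ := hy
  have hτ : 0 < τ := hc.trans hct
  rw [Set.mem_smul_set_iff_inv_smul_mem₀ hτ.ne']
  exact frontier_of_support hP h (fun z hz => by rw [this]; exact hM z hz)

lemma exists_shift (D : ℕ) (hD : 0 < D) (k : ℕ) {p q x : ℝ × ℝ} (hp : (D : ℝ) • p ∈ latticePts)
    (hq : (D : ℝ) • q ∈ latticePts) (hx : x ∈ latticePts)
    (hxs : ((D * k + 1 : ℕ) : ℝ)⁻¹ • x ∈ segment ℝ p q) :
    ∃ w ∈ latticePts, OS (3 * D - 1) p q w := by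
  rw [segment_eq_image'] at hxs
  obtain ⟨s, -, hs⟩ := hxs
  have ht : ((D * k + 1 : ℕ) : ℝ) ≠ 0 := by positivity
  have hx' : x = ((D * k + 1 : ℕ) : ℝ) • (p + s • (q - p)) := by
    rw [show p + s • (q - p) = ((D * k + 1 : ℕ) : ℝ)⁻¹ • x from hs, smul_smul, mul_inv_cancel₀ ht, one_smul]
  set a := ((D * k + 1 : ℕ) : ℝ) * s with ha
  have hD0 : (0 : ℝ) < D := by exact_mod_cast hD
  have hD1 : (1 : ℝ) ≤ D := by exact_mod_cast hD
  set j : ℤ := ⌊a / D⌋ + 1 with hj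
  have hj1 : a < j * D := by
    rw [← div_lt_iff₀ hD0, hj]; push_cast; exact Int.lt_floor_add_one _
  have hj2 : j * D ≤ a + D := by
    have := Int.floor_le (a / D)
    rw [le_div_iff₀ hD0] at this
    rw [hj]; push_cast; linarith
  refine ⟨(((k : ℤ) + 3 : ℤ) : ℝ) • ((D : ℝ) • p) - x + (j : ℝ) • ((D : ℝ) • q - (D : ℝ) • p), ?_, ?_⟩
  · exact lat_add (lat_sub (lat_smul _ hp) hx) (lat_smul _ (lat_sub hq hp))
  · refine ⟨j * D - a, by linarith, by linarith, ?_⟩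
    rw [hx', ha]
    ext <;> simp <;> ring

lemma OS_add {t N : ℝ} (ht : 0 < t) {p q x w : ℝ × ℝ} (hx : t⁻¹ • x ∈ segment ℝ p q)
    (hw : OS N p q w) : OS (t + N) p q (x + w) := by
  rw [segment_eq_image'] at hx
  obtain ⟨s, ⟨hs0, hs1⟩, hs⟩ := hx
  obtain ⟨c, hc, hcN, rfl⟩ := hw
  have hx' : x = t • (p + s • (q - p)) := by
    rw [show p + s • (q - p) = t⁻¹ • x from hs, smul_smul, mul_inv_cancel₀ ht.ne', one_smul]
  refine ⟨t * s + c, by positivity, by nlinarith, ?_⟩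
  rw [hx']
  ext <;> simp <;> ring

lemma key_count (V : Set (ℝ × ℝ)) (hV : V.Finite) (hi : (interior (convexHull ℝ V)).Nonempty)
    (D : ℕ) (hD : 0 < D) (hDV : ∀ v ∈ V, (D : ℝ) • v ∈ latticePts)
    (p₀ q₀ : ℝ × ℝ) (hp₀ : p₀ ∈ V) (hq₀ : q₀ ∈ V) (hne : p₀ ≠ q₀)
    (hF₀ : FaceSeg (convexHull ℝ V) p₀ q₀)
    (hnr : ∀ s : ℝ, p₀ + s • (q₀ - p₀) ∉ latticePts) (k : ℕ) :
    ((((D * k + 1 : ℕ) : ℝ) • frontier (convexHull ℝ V)) ∩ latticePts).ncard + (k + 2) ≤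
    ((((D * (k + 3) : ℕ) : ℝ) • frontier (convexHull ℝ V)) ∩ latticePts).ncard + V.ncard := by
  classical
  set P := convexHull ℝ V with hP
  have hVP : V ⊆ P := subset_convexHull ℝ V
  have hconv : Convex ℝ P := convex_convexHull ℝ V
  have hcomp : IsCompact P := hV.isCompact_convexHull ℝ
  have hfr : frontier P ⊆ P := hcomp.isClosed.frontier_subset
  set t : ℝ := ((D * k + 1 : ℕ) : ℝ) with ht
  set T : ℝ := ((D * (k + 3) : ℕ) : ℝ) with hT
  have ht0 : 0 < t := by rw [ht]; positivity
  have hT0 : 0 < T := by rw [hT]; positivity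
  have hTt : T = t + (3 * D - 1) := by rw [hT, ht]; push_cast; ring
  have hbd : ∀ τ : ℝ, ((τ • frontier P) ∩ latticePts).Finite := fun τ =>
    lat_finite (((hcomp.isBounded.subset hfr)).smul₀ τ)
  set A := (t • frontier P) ∩ latticePts with hA
  set B := (T • frontier P) ∩ latticePts with hB
  set A' := A \ (t • V) with hA'
  have hg : ∀ F : Set (ℝ × ℝ), ∃ w : ℝ × ℝ,
      (∃ w' ∈ latticePts, ∃ p ∈ V, ∃ q ∈ V, FaceSeg P p q ∧ F = segment ℝ p q ∧
        OS (3 * D - 1) p q w') →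
      (w ∈ latticePts ∧ ∃ p ∈ V, ∃ q ∈ V, FaceSeg P p q ∧ F = segment ℝ p q ∧
        OS (3 * D - 1) p q w) := by
    intro F
    by_cases h : (∃ w' ∈ latticePts, ∃ p ∈ V, ∃ q ∈ V, FaceSeg P p q ∧ F = segment ℝ p q ∧
        OS (3 * D - 1) p q w')
    · obtain ⟨w, hw⟩ := h
      exact ⟨w, fun _ => hw⟩
    · exact ⟨0, fun h' => (h h').elim⟩
  choose g hg using hg
  have hface : ∀ x ∈ A', ∃ F : Set (ℝ × ℝ), t⁻¹ • x ∈ F ∧ g F ∈ latticePts ∧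
      ∃ p ∈ V, ∃ q ∈ V, FaceSeg P p q ∧ F = segment ℝ p q ∧ OS (3 * D - 1) p q (g F) := by
    rintro x ⟨⟨hxf, hxl⟩, hxV⟩
    rw [Set.mem_smul_set_iff_inv_smul_mem₀ ht0.ne'] at hxf
    obtain ⟨α, β, hab, hs⟩ := support_of_frontier hconv hi hxf
    obtain ⟨p, hp, q, hq, hpq⟩ := exists_face V hV α β _ hab hs _ (hfr hxf) rfl
    have hxs := (hpq _ (hfr hxf)).1 rfl
    obtain ⟨w, hw, hOS⟩ := exists_shift D hD k (hDV p hp) (hDV q hq) hxl hxs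
    exact ⟨segment ℝ p q, hxs, hg _ ⟨w, hw, p, hp, q, hq, ⟨α, β, _, hab, hs, hpq⟩, rfl, hOS⟩⟩
  choose! F hF1 hF2 hF3 using hface
  have himg : ∀ x ∈ A', ∃ p ∈ V, ∃ q ∈ V, FaceSeg P p q ∧ F x = segment ℝ p q ∧
      OS T p q (x + g (F x)) := by
    intro x hx
    obtain ⟨p, hp, q, hq, hpq, hFe, hOS⟩ := hF3 x hx
    refine ⟨p, hp, q, hq, hpq, hFe, ?_⟩
    rw [hTt]
    exact OS_add ht0 (hFe ▸ hF1 x hx) hOS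
  have hinj : Set.InjOn (fun x => x + g (F x)) A' := by
    intro x hx y hy hxy
    simp only at hxy
    obtain ⟨p, hp, q, hq, hpq, hFe, hOS⟩ := himg x hx
    obtain ⟨p', hp', q', hq', hpq', hFe', hOS'⟩ := himg y hy
    rw [← hxy] at hOS'
    have := seg_eq hconv (hVP hp) (hVP hq) (hVP hp') (hVP hq') hpq hpq' hOS hOS'
    have hFF : F x = F y := by rw [hFe, hFe', this]
    rw [hFF] at hxy
    exact add_right_cancel hxy
  set e : ℕ → ℝ × ℝ := fun j => T • p₀ + ((j : ℝ) * D) • (q₀ - p₀) with he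
  set X : Set (ℝ × ℝ) := e '' (Finset.Ioo 0 (k + 3) : Finset ℕ) with hX
  have heOS : ∀ j ∈ Finset.Ioo 0 (k + 3), OS T p₀ q₀ (e j) := by
    intro j hj
    rw [Finset.mem_Ioo] at hj
    have hD0 : (0 : ℝ) < D := by exact_mod_cast hD
    have h1 : (0 : ℝ) < j := by exact_mod_cast hj.1
    have h2 : (j : ℝ) < k + 3 := by exact_mod_cast hj.2
    refine ⟨(j : ℝ) * D, by positivity, ?_, rfl⟩
    rw [hT]; push_cast; nlinarith
  have heinj : Function.Injective e := by
    intro i j hij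
    simp only [he] at hij
    have h1 := add_left_cancel hij
    have h2 := smul_left_injective ℝ (sub_ne_zero.2 hne.symm) h1
    have hD0 : (D : ℝ) ≠ 0 := by positivity
    exact_mod_cast mul_right_cancel₀ hD0 h2
  have hXcard : X.ncard = k + 2 := by
    rw [hX, Set.ncard_image_of_injective _ heinj, Set.ncard_coe_finset, Nat.card_Ioo]
    omega
  have hXB : X ⊆ B := by
    rintro _ ⟨j, hj, rfl⟩
    refine ⟨(heOS j hj).frontier hconv (hVP hp₀) (hVP hq₀) hF₀, ?_⟩
    have : e j = (((k : ℤ) + 3 : ℤ) : ℝ) • ((D : ℝ) • p₀) +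
        ((j : ℤ) : ℝ) • ((D : ℝ) • q₀ - (D : ℝ) • p₀) := by
      rw [he, hT]
      ext <;> simp <;> ring
    rw [this]
    exact lat_add (lat_smul _ (hDV _ hp₀)) (lat_smul _ (lat_sub (hDV _ hq₀) (hDV _ hp₀)))
  have hIB : (fun x => x + g (F x)) '' A' ⊆ B := by
    rintro _ ⟨x, hx, rfl⟩
    obtain ⟨p, hp, q, hq, hpq, hFe, hOS⟩ := himg x hx
    exact ⟨hOS.frontier hconv (hVP hp) (hVP hq) hpq, lat_add hx.1.2 (hF2 x hx)⟩
  have hdisj : Disjoint ((fun x => x + g (F x)) '' A') X := by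
    rw [Set.disjoint_left]
    rintro _ ⟨x, hx, rfl⟩ ⟨j, hj, hje⟩
    simp only at hje
    obtain ⟨p, hp, q, hq, hpq, hFe, hOS⟩ := himg x hx
    have hO := heOS j hj
    rw [hje] at hO
    have hseg := seg_eq hconv (hVP hp) (hVP hq) (hVP hp₀) (hVP hq₀) hpq hF₀ hOS hO
    have hx1 := hF1 x hx
    rw [hFe, hseg, segment_eq_image'] at hx1
    obtain ⟨s, -, hs⟩ := hx1
    have hx' : x = t • (p₀ + s • (q₀ - p₀)) := by
      rw [show p₀ + s • (q₀ - p₀) = t⁻¹ • x from hs, smul_smul, mul_inv_cancel₀ ht0.ne', one_smul]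
    apply hnr (t * s)
    have : p₀ + (t * s) • (q₀ - p₀) = x - ((k : ℤ) : ℝ) • ((D : ℝ) • p₀) := by
      rw [hx', ht]
      ext <;> simp <;> ring
    rw [this]
    exact lat_sub hx.1.2 (lat_smul _ (hDV _ hp₀))
  have hAfin : A.Finite := hbd t
  have hBfin : B.Finite := hbd T
  have hA'fin : A'.Finite := hAfin.subset Set.diff_subset
  have c1 : A'.ncard + (k + 2) ≤ B.ncard := by
    rw [← hXcard, ← Set.ncard_image_of_injOn hinj,
      ← Set.ncard_union_eq hdisj (hA'fin.image _) (hBfin.subset hXB)]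
    exact Set.ncard_le_ncard (Set.union_subset hIB hXB) hBfin
  have c2 : A.ncard ≤ A'.ncard + V.ncard := by
    have h1 : (t • V).ncard ≤ V.ncard := Set.ncard_image_le hV
    have h2 : A ⊆ A' ∪ (t • V) := by rw [hA', Set.diff_union_self]; exact Set.subset_union_left
    have h3 := Set.ncard_le_ncard h2 (hA'fin.union (hV.image _))
    have h4 := Set.ncard_union_le A' (t • V)
    omega
  omega

/-- if `P` is a rational convex polygon with
`#(∂(tP) ∩ ℤ²) = t · #(∂P ∩ ℤ²)` for all positive integers `t`, then every edge
of `P` is reticular, i.e. its affine span contains a lattice point. -/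
theorem stmt_13 (P : Set (ℝ × ℝ)) (hP : IsRatPolygon P)
    (hb : ∀ t : ℕ, 0 < t →
      (frontier ((t : ℝ) • P) ∩ latticePts).ncard =
        t * (frontier P ∩ latticePts).ncard) :
    ∀ E : Set (ℝ × ℝ), IsEdge P E →
      ∃ p : ℝ × ℝ, p ∈ affineSpan ℝ E ∧ p ∈ latticePts := by
  rintro E ⟨hE, hdim⟩
  obtain ⟨V₀, hPV, hi⟩ := hP
  obtain ⟨D, hD, hDV⟩ := common_denom V₀
  set V := qpt '' (V₀ : Set (ℚ × ℚ)) with hVdef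
  have hV : V.Finite := V₀.finite_toSet.image _
  subst hPV
  have hEne : E.Nonempty := by
    by_contra h
    rw [Set.not_nonempty_iff_eq_empty] at h
    rw [h, vectorSpan_empty] at hdim
    simp at hdim
  obtain ⟨f, hf⟩ := hE hEne
  have hfe : ∀ z : ℝ × ℝ, f z = f (1, 0) * z.1 + f (0, 1) * z.2 := by
    intro z
    have : z = z.1 • ((1, 0) : ℝ × ℝ) + z.2 • ((0, 1) : ℝ × ℝ) := by ext <;> simp
    conv_lhs => rw [this]
    rw [map_add, map_smul, map_smul]
    simp [mul_comm]
  have hab : f (1, 0) ≠ 0 ∨ f (0, 1) ≠ 0 := by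
    by_contra hcon
    push Not at hcon
    have hEP : E = convexHull ℝ V := by
      have hf0 : ∀ z, f z = 0 := fun z => by rw [hfe z, hcon.1, hcon.2]; ring
      rw [hf]
      ext z
      exact ⟨fun h => h.1, fun h => ⟨h, fun y _ => by rw [hf0, hf0]⟩⟩
    have h1 : affineSpan ℝ E = ⊤ := by
      rw [hEP]
      exact affineSpan_eq_top_of_nonempty_interior (by
        rwa [(convex_convexHull ℝ V).convexHull_eq])
    rw [← direction_affineSpan, h1, AffineSubspace.direction_top] at hdim
    simp at hdim
  obtain ⟨x, hx⟩ := hEne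
  have hx' := hx
  rw [hf] at hx'
  obtain ⟨hxP, hxm⟩ := hx'
  have hM : ∀ z ∈ convexHull ℝ V, f (1, 0) * z.1 + f (0, 1) * z.2 ≤ f x := fun z hz => by
    rw [← hfe]; exact hxm z hz
  obtain ⟨p, hp, q, hq, hpq⟩ := exists_face V hV _ _ (f x) hab hM x hxP (hfe x).symm
  have hsub := subset_convexHull ℝ V
  have hEs : E = segment ℝ p q := by
    ext z
    constructor
    · intro hz
      rw [hf] at hz
      exact (hpq z hz.1).1 (by rw [← hfe]; exact le_antisymm (hxm z hz.1) (hz.2 x hxP))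
    · intro hz
      have hzP := (convex_convexHull ℝ V).segment_subset (hsub hp) (hsub hq) hz
      have := (hpq z hzP).2 hz
      rw [← hfe] at this
      rw [hf]
      exact ⟨hzP, fun y hy => by rw [this]; exact hxm y hy⟩
  have hne : p ≠ q := by
    rintro rfl
    rw [hEs, segment_same, vectorSpan_singleton] at hdim
    simp at hdim
  by_contra hcon
  push Not at hcon
  have hnr : ∀ s : ℝ, p + s • (q - p) ∉ latticePts := by
    intro s
    apply hcon
    have := AffineMap.lineMap_mem (Q := affineSpan ℝ E) s
      (subset_affineSpan ℝ E (hEs ▸ left_mem_segment ℝ p q))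
      (subset_affineSpan ℝ E (hEs ▸ right_mem_segment ℝ p q))
    rwa [AffineMap.lineMap_apply_module', add_comm] at this
  have hfrs : ∀ t : ℕ, 0 < t →
      frontier ((t : ℝ) • convexHull ℝ V) = (t : ℝ) • frontier (convexHull ℝ V) := by
    intro t ht
    have ht' : (t : ℝ) ≠ 0 := by positivity
    exact ((Homeomorph.smulOfNeZero (t : ℝ) ht').image_frontier _).symm
  set b := (frontier (convexHull ℝ V) ∩ latticePts).ncard with hbdef
  set k := 3 * D * b + V.ncard with hk
  have h := key_count V hV hi D hD hDV p q hp hq hne ⟨_, _, _, hab, hM, hpq⟩ hnr k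
  rw [← hfrs _ (by positivity), ← hfrs _ (by positivity), hb _ (by positivity),
    hb _ (by positivity)] at h
  nlinarith
end

section
/- Let P ⊂ ℝ² be a rational convex polygon that is pseudointegral and has 0 in its interior. Then the following are equivalent: (i) the only lattice point in the interior of P is the origin; (ii) for every edge E of P there is a primitive vector u ∈ ℤ² with E ⊆ {a ∈ ℝ² : ⟨u,a⟩ = 1} and ⟨u,p⟩ ≤ 1 for all p ∈ P; (iii) the dual polygon P° := {u ∈ ℝ² : ⟨u,a⟩ ≤ 1 for all a ∈ P} is the convex hull of a finite subset of ℤ². -/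
open Set Pointwise

/-- The standard inner product on ℝ². -/
def dotR (u a : ℝ × ℝ) : ℝ := u.1 * a.1 + u.2 * a.2

/-- The coercion of an integer point of the plane to a real point. -/
def zpt (v : ℤ × ℤ) : ℝ × ℝ := ((v.1 : ℝ), (v.2 : ℝ))


lemma oneD (S : Finset (ℤ × ℤ)) (y1 y2 : ℚ) (hy : y1 ≠ y2)
    (h1 : ∀ c ∈ S, 0 ≤ (c.1 : ℚ) + y1 * c.2) (h2 : ∀ c ∈ S, 0 ≤ (c.1 : ℚ) + y2 * c.2)
    (h0 : ∀ c ∈ S, c ≠ (0, 0)) (hp : ∃ c ∈ S, 0 < c.2) (hn : ∃ c ∈ S, c.2 < 0) :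
    ∃ α β : ℚ, α < β ∧ (∀ s y : ℤ, 0 < s →
      ((∀ c ∈ S, 0 < s * c.1 + y * c.2 ∨ (s * c.1 + y * c.2 = 0 ∧ 0 < c.2)) ↔
        (α * s ≤ y ∧ y < β * s))) ∧ (∀ s y : ℤ, 0 < s →
      ((∀ c ∈ S, 0 < s * c.1 + y * c.2 ∨ (s * c.1 + y * c.2 = 0 ∧ c.2 < 0)) ↔
        (α * s < y ∧ y ≤ β * s))) := by
  classical
  obtain ⟨cp, hcp, hcpm⟩ := Finset.exists_max_image (S.filter (fun c => 0 < c.2))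
    (fun c => -(c.1 : ℚ) / c.2) (by obtain ⟨c, h, h'⟩ := hp; exact ⟨c, by simp [h, h']⟩)
  obtain ⟨cn, hcn, hcnm⟩ := Finset.exists_min_image (S.filter (fun c => c.2 < 0))
    (fun c => -(c.1 : ℚ) / c.2) (by obtain ⟨c, h, h'⟩ := hn; exact ⟨c, by simp [h, h']⟩)
  simp only [Finset.mem_filter] at hcp hcpm hcn hcnm
  have lowP : ∀ y : ℚ, 0 ≤ (cp.1 : ℚ) + y * cp.2 → -(cp.1 : ℚ) / cp.2 ≤ y := by
    intro y h
    have : (0:ℚ) < cp.2 := by exact_mod_cast hcp.2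
    rw [div_le_iff₀ this]; linarith
  have highN : ∀ y : ℚ, 0 ≤ (cn.1 : ℚ) + y * cn.2 → y ≤ -(cn.1 : ℚ) / cn.2 := by
    intro y h
    have : (cn.2 : ℚ) < 0 := by exact_mod_cast hcn.2
    rw [le_div_iff_of_neg this]; linarith
  -- key comparison facts
  have keyP : ∀ c : ℤ × ℤ, 0 < c.2 → ∀ s y : ℤ, 0 < s →
      (0 ≤ s * c.1 + y * c.2 ↔ -(c.1 : ℚ) / c.2 * s ≤ y) ∧
      (0 < s * c.1 + y * c.2 ↔ -(c.1 : ℚ) / c.2 * s < y) := by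
    intro c hc s y hs
    have hc' : (0:ℚ) < c.2 := by exact_mod_cast hc
    rw [div_mul_eq_mul_div, div_le_iff₀ hc', div_lt_iff₀ hc']
    constructor
    · rw [← Int.cast_nonneg_iff (R := ℚ)]; push_cast; constructor <;> intro h <;> linarith
    · rw [← Int.cast_pos (R := ℚ)]; push_cast; constructor <;> intro h <;> linarith
  have keyN : ∀ c : ℤ × ℤ, c.2 < 0 → ∀ s y : ℤ, 0 < s →
      (0 ≤ s * c.1 + y * c.2 ↔ y ≤ -(c.1 : ℚ) / c.2 * s) ∧
      (0 < s * c.1 + y * c.2 ↔ y < -(c.1 : ℚ) / c.2 * s) := by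
    intro c hc s y hs
    have hc' : (c.2 : ℚ) < 0 := by exact_mod_cast hc
    rw [div_mul_eq_mul_div, le_div_iff_of_neg hc', lt_div_iff_of_neg hc']
    constructor
    · rw [← Int.cast_nonneg_iff (R := ℚ)]; push_cast; constructor <;> intro h <;> linarith
    · rw [← Int.cast_pos (R := ℚ)]; push_cast; constructor <;> intro h <;> linarith
  have keyZ : ∀ c ∈ S, c.2 = 0 → 0 < c.1 := by
    intro c hc h
    have h3 := h1 c hc
    rw [h] at h3
    have h4 : 0 ≤ c.1 := by
      have : (0:ℚ) ≤ c.1 := by simpa using h3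
      exact_mod_cast this
    rcases h4.lt_or_eq with h5 | h5
    · exact h5
    · exact absurd (Prod.ext h5.symm h) (h0 c hc)
  refine ⟨-(cp.1 : ℚ) / cp.2, -(cn.1 : ℚ) / cn.2, ?_, ?_, ?_⟩
  · have a1 := lowP y1 (h1 _ hcp.1)
    have a2 := lowP y2 (h2 _ hcp.1)
    have b1 := highN y1 (h1 _ hcn.1)
    have b2 := highN y2 (h2 _ hcn.1)
    rcases lt_or_gt_of_ne hy with h | h <;> linarith
  · intro s y hs
    have hs' : (0:ℚ) < s := by exact_mod_cast hs
    constructor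
    · intro h
      constructor
      · rw [← (keyP cp hcp.2 s y hs).1]
        rcases h cp hcp.1 with h | h <;> omega
      · rw [← (keyN cn hcn.2 s y hs).2]
        rcases h cn hcn.1 with h | h
        · exact h
        · have := hcn.2; omega
    · rintro ⟨ha, hb⟩ c hc
      rcases lt_trichotomy c.2 0 with h | h | h
      · left
        rw [(keyN c h s y hs).2]
        exact hb.trans_le (mul_le_mul_of_nonneg_right (hcnm c ⟨hc, h⟩) hs'.le)
      · left
        rw [h]; have := mul_pos hs (keyZ c hc h); simpa using this
      · have : 0 ≤ s * c.1 + y * c.2 := by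
          rw [(keyP c h s y hs).1]
          exact (mul_le_mul_of_nonneg_right (hcpm c ⟨hc, h⟩) hs'.le).trans ha
        omega
  · intro s y hs
    have hs' : (0:ℚ) < s := by exact_mod_cast hs
    constructor
    · intro h
      constructor
      · rw [← (keyP cp hcp.2 s y hs).2]
        rcases h cp hcp.1 with h | h
        · exact h
        · have := hcp.2; omega
      · rw [← (keyN cn hcn.2 s y hs).1]
        rcases h cn hcn.1 with h | h <;> omega
    · rintro ⟨ha, hb⟩ c hc
      rcases lt_trichotomy c.2 0 with h | h | h
      · have : 0 ≤ s * c.1 + y * c.2 := by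
          rw [(keyN c h s y hs).1]
          exact hb.trans (mul_le_mul_of_nonneg_right (hcnm c ⟨hc, h⟩) hs'.le)
        omega
      · left
        rw [h]; have := mul_pos hs (keyZ c hc h); simpa using this
      · left
        rw [(keyP c h s y hs).2]
        exact (mul_le_mul_of_nonneg_right (hcpm c ⟨hc, h⟩) hs'.le).trans_lt ha

/-- integer dot product -/
def dz (n x : ℤ × ℤ) : ℤ := n.1 * x.1 + n.2 * x.2
/-- rotated dot product -/
def jz (n x : ℤ × ℤ) : ℤ := n.2 * x.1 - n.1 * x.2

/-- `x` lies in the half-open cone of `n` -/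
def Cone (W : Finset (ℤ × ℤ)) (ε : ℤ) (n x : ℤ × ℤ) : Prop :=
  ∀ n' ∈ W, n' ≠ n → 0 < dz (n - n') x ∨ (dz (n - n') x = 0 ∧ 0 < ε * jz (n - n') x)

lemma jz_tie (a b s : ℤ) (δ x : ℤ × ℤ) (hs : a * x.1 + b * x.2 = s) (hs0 : 0 < s)
    (h : dz δ x = 0) : (0 < jz δ x ↔ 0 < -b * δ.1 + a * δ.2) ∧
    (jz δ x < 0 ↔ -b * δ.1 + a * δ.2 < 0) := by
  have key : s * jz δ x = (-b * δ.1 + a * δ.2) * (x.1 ^ 2 + x.2 ^ 2) := by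
    have : s * jz δ x = (-b * δ.1 + a * δ.2) * (x.1 ^ 2 + x.2 ^ 2) +
      (b * x.1 - a * x.2) * dz δ x := by
      rw [← hs]; unfold jz dz; ring
    rw [this, h]; ring
  have hx : 0 < x.1 ^ 2 + x.2 ^ 2 := by
    by_contra hc
    have e1 : x.1 = 0 := by nlinarith [sq_nonneg x.1, sq_nonneg x.2]
    have e2 : x.2 = 0 := by nlinarith [sq_nonneg x.1, sq_nonneg x.2]
    rw [e1, e2] at hs; simp at hs; omega
  constructor
  · constructor
    · intro h; have := mul_pos hs0 h; rw [key] at this; exact (mul_pos_iff_of_pos_right hx).1 this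
    · intro h; have := mul_pos h hx; rw [← key] at this; exact (mul_pos_iff_of_pos_left hs0).1 this
  · constructor
    · intro h; have := mul_neg_of_pos_of_neg hs0 h; rw [key] at this; exact neg_of_mul_neg_left this hx.le
    · intro h; have := mul_neg_of_neg_of_pos h hx; rw [← key] at this; exact neg_of_mul_neg_right this hs0.le

lemma cone_unique (W : Finset (ℤ × ℤ)) (ε : ℤ) (hε : ε ≠ 0) (hW : W.Nonempty) (x : ℤ × ℤ)
    (hx : x ≠ 0) : ∃! n, n ∈ W ∧ Cone W ε n x := by
  obtain ⟨n, hn, hm⟩ := Finset.exists_max_image W (fun n => toLex (dz n x, ε * jz n x)) hW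
  have sub1 : ∀ n n', dz (n - n') x = dz n x - dz n' x := by intros; simp [dz]; ring
  have sub2 : ∀ n n', ε * jz (n - n') x = ε * jz n x - ε * jz n' x := by intros; simp [jz]; ring
  refine ⟨n, ⟨hn, ?_⟩, ?_⟩
  · intro n' hn' hne
    have := hm n' hn'
    rw [Prod.Lex.le_iff] at this
    simp only [ofLex_toLex] at this
    rw [sub1, sub2]
    rcases this with h | ⟨h, h'⟩
    · left; omega
    · right
      refine ⟨by omega, ?_⟩
      rcases h'.lt_or_eq with h'' | h''
      · omega
      · exfalso
        apply hne
        have h3 := mul_left_cancel₀ hε h''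
        unfold dz at h; unfold jz at h3
        have hxx : x.1 ^ 2 + x.2 ^ 2 ≠ 0 := by
          intro hc
          apply hx
          have e1 : x.1 = 0 := by nlinarith [sq_nonneg x.1, sq_nonneg x.2]
          have e2 : x.2 = 0 := by nlinarith [sq_nonneg x.1, sq_nonneg x.2]
          exact Prod.ext e1 e2
        apply Prod.ext
        · apply mul_right_cancel₀ hxx; linear_combination x.1 * h - x.2 * h3
        · apply mul_right_cancel₀ hxx; linear_combination x.2 * h + x.1 * h3
  · rintro n' ⟨hn', hc⟩
    by_contra hne
    have h1 := hc n hn (Ne.symm hne)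
    have := hm n' hn'
    rw [Prod.Lex.le_iff] at this
    simp only [ofLex_toLex] at this
    rw [sub1, sub2] at h1
    omega

lemma cone_count (W : Finset (ℤ × ℤ)) (D : ℤ) (hD : 0 < D)
    (hpos : ∀ x : ℤ × ℤ, x ≠ 0 → ∃ n ∈ W, 0 < dz n x)
    (n : ℤ × ℤ) (hn : n ∈ W)
    (hpq : ∃ p q : ℚ × ℚ, p ≠ q ∧ n.1 * p.1 + n.2 * p.2 = D ∧ n.1 * q.1 + n.2 * q.2 = D ∧
      ∀ n' ∈ W, n'.1 * p.1 + n'.2 * p.2 ≤ D ∧ n'.1 * q.1 + n'.2 * q.2 ≤ D) :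
    ∃ (d : ℤ) (u : ℤ × ℤ) (α β : ℚ), 0 < d ∧ IsCoprime u.1 u.2 ∧ n = (d * u.1, d * u.2) ∧
      α < β ∧
      (∀ j : ℤ, 0 < j → ({x | Cone W 1 n x ∧ dz n x = j}.ncard : ℤ) =
        if d ∣ j then ⌈β * j⌉ - ⌈α * j⌉ else 0) ∧
      (∀ j : ℤ, 0 < j → ({x | Cone W (-1) n x ∧ dz n x = j}.ncard : ℤ) =
        if d ∣ j then ⌊β * j⌋ - ⌊α * j⌋ else 0) := by
  classical
  obtain ⟨p, q, hne, hp, hq, hall⟩ := hpq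
  have hn0 : n ≠ 0 := by
    rintro rfl
    have : (D : ℚ) = 0 := by rw [← hp]; simp
    have : D = 0 := by exact_mod_cast this
    omega
  have hg : Int.gcd n.1 n.2 ≠ 0 := by
    intro h; rw [Int.gcd_eq_zero_iff] at h; exact hn0 (Prod.ext h.1 h.2)
  obtain ⟨d, a, b, hd, hcop, hna, hnb⟩ : ∃ d a b : ℤ, 0 < d ∧ IsCoprime a b ∧ n.1 = d * a ∧
      n.2 = d * b := by
    refine ⟨Int.gcd n.1 n.2, n.1 / Int.gcd n.1 n.2, n.2 / Int.gcd n.1 n.2, by omega, ?_, ?_, ?_⟩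
    · rw [Int.isCoprime_iff_gcd_eq_one]
      exact Int.gcd_ediv_gcd_ediv_gcd (by omega)
    · rw [Int.mul_ediv_cancel' (Int.gcd_dvd_left ..)]
    · rw [Int.mul_ediv_cancel' (Int.gcd_dvd_right ..)]
  obtain ⟨e, f, hef⟩ := id hcop
  -- constraints
  set S : Finset (ℤ × ℤ) := (W.erase n).image
    (fun n' => (dz (n - n') (e, f), dz (n - n') (-b, a))) with hS
  have hdQ : (0:ℚ) < d := by exact_mod_cast hd
  have hDQ : (0:ℚ) < D := by exact_mod_cast hD
  have hefQ : (e:ℚ) * a + f * b = 1 := by exact_mod_cast hef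
  have dual : ∀ δ : ℤ × ℤ, ∀ v : ℚ × ℚ, δ.1 * v.1 + δ.2 * v.2 =
      (a * v.1 + b * v.2) * dz δ (e, f) + (-f * v.1 + e * v.2) * dz δ (-b, a) := by
    intro δ v
    simp only [dz]; push_cast
    linear_combination (-(δ.1:ℚ) * v.1 - δ.2 * v.2) * hefQ
  have feas : ∀ v : ℚ × ℚ, n.1 * v.1 + n.2 * v.2 = D →
      (∀ n' ∈ W, n'.1 * v.1 + n'.2 * v.2 ≤ D) → ∀ c ∈ S,
      0 ≤ (c.1 : ℚ) + (-f * v.1 + e * v.2) / (D / d) * c.2 := by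
    intro v hv hle c hc
    simp only [hS, Finset.mem_image, Finset.mem_erase] at hc
    obtain ⟨n', ⟨hn'n, hn'⟩, rfl⟩ := hc
    have h1 := dual (n - n') v
    have h2 : (a * v.1 + b * v.2) = (D : ℚ) / d := by
      rw [eq_div_iff hdQ.ne', ← hv, hna, hnb]; push_cast; ring
    rw [h2] at h1
    have h3 := hle n' hn'
    have h4 : (0:ℚ) ≤ ((n - n').1 : ℤ) * v.1 + ((n - n').2 : ℤ) * v.2 := by
      simp only [Prod.fst_sub, Prod.snd_sub]; push_cast; linarith
    rw [h1] at h4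
    have hDd : (0:ℚ) < D / d := div_pos hDQ hdQ
    have h5 := div_nonneg h4 hDd.le
    have h6 : ((D:ℚ) / d * dz (n - n') (e, f) + (-f * v.1 + e * v.2) * dz (n - n') (-b, a)) / (D / d)
      = dz (n - n') (e, f) + (-f * v.1 + e * v.2) / (D / d) * dz (n - n') (-b, a) := by
      field_simp
    rw [h6] at h5
    exact h5
  have dualZ : ∀ δ : ℤ × ℤ, ∀ v : ℤ × ℤ, dz δ v =
      (a * v.1 + b * v.2) * dz δ (e, f) + (-f * v.1 + e * v.2) * dz δ (-b, a) := by
    intro δ v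
    simp only [dz]
    linear_combination (-(δ.1) * v.1 - δ.2 * v.2) * hef
  have hS0 : ∀ c ∈ S, c ≠ (0, 0) := by
    intro c hc hc0
    simp only [hS, Finset.mem_image, Finset.mem_erase] at hc
    obtain ⟨n', ⟨hn'n, hn'⟩, rfl⟩ := hc
    simp only [Prod.mk.injEq] at hc0
    apply hn'n
    have h1 := dualZ (n - n') (1, 0)
    have h2 := dualZ (n - n') (0, 1)
    rw [hc0.1, hc0.2] at h1 h2
    simp [dz] at h1 h2
    exact Prod.ext (by omega) (by omega)
  have hab : ((-b, a) : ℤ × ℤ) ≠ 0 := by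
    intro h
    have h1 : -b = 0 := congrArg Prod.fst h
    have h2 : a = 0 := congrArg Prod.snd h
    have h3 : b = 0 := by omega
    rw [h2, h3] at hef; simp at hef
  have hnab : dz n (-b, a) = 0 := by simp only [dz, hna, hnb]; ring
  have sub1 : ∀ n n' x, dz (n - n') x = dz n x - dz n' x := by intros; simp [dz]; ring
  have hSn : ∃ c ∈ S, c.2 < 0 := by
    obtain ⟨n', hn', h⟩ := hpos _ hab
    refine ⟨_, Finset.mem_image_of_mem _ (Finset.mem_erase.2 ⟨?_, hn'⟩), ?_⟩
    · rintro rfl; omega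
    · simp only [sub1]; omega
  have hSp : ∃ c ∈ S, 0 < c.2 := by
    obtain ⟨n', hn', h⟩ := hpos (-(-b, a)) (neg_ne_zero.2 hab)
    have h' : dz n' (-(-b, a)) = - dz n' (-b, a) := by simp [dz]; ring
    refine ⟨_, Finset.mem_image_of_mem _ (Finset.mem_erase.2 ⟨?_, hn'⟩), ?_⟩
    · rintro rfl; omega
    · simp only [sub1]; omega
  obtain ⟨α, β, hαβ, hplus, hminus⟩ := oneD S _ _ (by
      intro h
      have hDd : (0:ℚ) < D / d := div_pos hDQ hdQ
      rw [div_left_inj' hDd.ne'] at h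
      have hh : (a:ℚ) * p.1 + b * p.2 = a * q.1 + b * q.2 := by
        have := hp.trans hq.symm
        rw [hna, hnb] at this; push_cast at this
        apply mul_left_cancel₀ hdQ.ne'; linarith
      apply hne
      apply Prod.ext
      · linear_combination e * hh - b * h - (p.1 - q.1) * hefQ
      · linear_combination f * hh + a * h - (p.2 - q.2) * hefQ)
    (feas p hp (fun n' h => (hall n' h).1)) (feas q hq (fun n' h => (hall n' h).2)) hS0 hSp hSn
  -- counting
  have count : ∀ ε : ℤ, ∀ j : ℤ, 0 < j → (¬ d ∣ j → {x | Cone W ε n x ∧ dz n x = j} = ∅) := by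
    intro ε j hj hdj
    ext x
    simp only [mem_ofPred_eq, mem_empty_iff_false, iff_false, not_and]
    intro _ h
    apply hdj
    refine ⟨a * x.1 + b * x.2, ?_⟩
    rw [← h]; simp only [dz, hna, hnb]; ring
  have mem : ∀ s : ℤ, 0 < s → ∀ y : ℤ,
      (Cone W 1 n (s * e - y * b, s * f + y * a) ↔ (α * s ≤ y ∧ y < β * s)) ∧
      (Cone W (-1) n (s * e - y * b, s * f + y * a) ↔ (α * s < y ∧ y ≤ β * s)) := by
    intro s hs y
    have hss : a * (s * e - y * b, s * f + y * a).1 + b * (s * e - y * b, s * f + y * a).2 = s := by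
      simp only; linear_combination s * hef
    have hyy : -f * (s * e - y * b, s * f + y * a).1 + e * (s * e - y * b, s * f + y * a).2 = y := by
      simp only; linear_combination y * hef
    rw [← hplus s y hs, ← hminus s y hs]
    generalize hx : ((s * e - y * b, s * f + y * a) : ℤ × ℤ) = x at *
    have hB : ∀ δ : ℤ × ℤ, dz δ (-b, a) = -b * δ.1 + a * δ.2 := by intro δ; simp [dz]; ring
    have hjj : ∀ δ, dz δ x = 0 → ((0 < jz δ x ↔ 0 < dz δ (-b, a)) ∧
        (jz δ x < 0 ↔ dz δ (-b, a) < 0)) := by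
      intro δ h; rw [hB]; exact jz_tie a b s δ x hss hs h
    have hdd : ∀ δ, dz δ x = s * dz δ (e, f) + y * dz δ (-b, a) := by
      intro δ; rw [dualZ δ x, hss, hyy]
    constructor
    · simp only [hS, Finset.forall_mem_image, Finset.mem_erase, Cone]
      constructor
      · rintro h n' ⟨h1, h2⟩
        rw [← hdd]
        have h3 := h n' h2 h1
        have h4 := hjj (n - n')
        omega
      · rintro h n' h2 h1
        have h3 := h ⟨h1, h2⟩
        rw [← hdd] at h3
        have h4 := hjj (n - n')
        omega
    · simp only [hS, Finset.forall_mem_image, Finset.mem_erase, Cone]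
      constructor
      · rintro h n' ⟨h1, h2⟩
        rw [← hdd]
        have h3 := h n' h2 h1
        have h4 := hjj (n - n')
        omega
      · rintro h n' h2 h1
        have h3 := h ⟨h1, h2⟩
        rw [← hdd] at h3
        have h4 := hjj (n - n')
        omega
  have img : ∀ ε : ℤ, ∀ s : ℤ, 0 < s → {x | Cone W ε n x ∧ dz n x = d * s} =
      (fun y : ℤ => ((s * e - y * b, s * f + y * a) : ℤ × ℤ)) ''
        {y | Cone W ε n (s * e - y * b, s * f + y * a)} := by
    intro ε s hs
    ext x
    simp only [mem_ofPred_eq, mem_image]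
    constructor
    · rintro ⟨hc, hx⟩
      have hx' : a * x.1 + b * x.2 = s := by
        apply mul_left_cancel₀ hd.ne'
        rw [← hx]; simp only [dz, hna, hnb]; ring
      have : ((s * e - (-f * x.1 + e * x.2) * b, s * f + (-f * x.1 + e * x.2) * a) : ℤ × ℤ) = x := by
        apply Prod.ext
        · simp only; linear_combination -e * hx' + x.1 * hef
        · simp only; linear_combination -f * hx' + x.2 * hef
      exact ⟨-f * x.1 + e * x.2, by rw [this]; exact hc, this⟩
    · rintro ⟨y, hy, rfl⟩
      refine ⟨hy, ?_⟩
      simp only [dz, hna, hnb]; linear_combination d * s * hef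
  have inj : ∀ s : ℤ, Function.Injective
      (fun y : ℤ => ((s * e - y * b, s * f + y * a) : ℤ × ℤ)) := by
    intro s y y' h
    simp only [Prod.mk.injEq] at h
    linear_combination -f * h.1 + e * h.2 - (y - y') * hef
  refine ⟨d, (a, b), α / d, β / d, hd, hcop, Prod.ext hna hnb, by gcongr, ?_, ?_⟩
  · intro j hj
    split_ifs with hdj
    · obtain ⟨s, rfl⟩ := hdj
      have hs : 0 < s := pos_of_mul_pos_right hj hd.le
      rw [img 1 s hs, Set.ncard_image_of_injective _ (inj s)]
      have : {y : ℤ | Cone W 1 n (s * e - y * b, s * f + y * a)} =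
          ((Finset.Ico ⌈α * s⌉ ⌈β * s⌉ : Finset ℤ) : Set ℤ) := by
        ext y
        simp only [mem_ofPred_eq, (mem s hs y).1, Finset.coe_Ico, mem_Ico, Int.ceil_le, Int.lt_ceil]
      rw [this, Set.ncard_coe_finset, Int.card_Ico, Int.toNat_of_nonneg]
      · push_cast
        congr 2 <;> field_simp
      · have : ⌈α * s⌉ ≤ ⌈β * s⌉ := Int.ceil_mono (by gcongr)
        omega
    · rw [count 1 j hj hdj]; simp
  · intro j hj
    split_ifs with hdj
    · obtain ⟨s, rfl⟩ := hdj
      have hs : 0 < s := pos_of_mul_pos_right hj hd.le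
      rw [img (-1) s hs, Set.ncard_image_of_injective _ (inj s)]
      have : {y : ℤ | Cone W (-1) n (s * e - y * b, s * f + y * a)} =
          ((Finset.Ioc ⌊α * s⌋ ⌊β * s⌋ : Finset ℤ) : Set ℤ) := by
        ext y
        simp only [mem_ofPred_eq, (mem s hs y).2, Finset.coe_Ioc, mem_Ioc, Int.floor_lt, Int.le_floor]
      rw [this, Set.ncard_coe_finset, Int.card_Ioc, Int.toNat_of_nonneg]
      · push_cast
        congr 2 <;> field_simp
      · have : ⌊α * s⌋ ≤ ⌊β * s⌋ := Int.floor_mono (by gcongr)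
        omega
    · rw [count (-1) j hj hdj]; simp

lemma poly_linear (p : Polynomial ℚ) (K : ℕ) (hK : 0 < K)
    (h : ∀ t : ℤ, p.eval ((t : ℚ) + 2 * K) - 2 * p.eval ((t : ℚ) + K) + p.eval (t : ℚ) = 0)
    (h0 : p.eval 0 = 0) : ∃ l : ℚ, ∀ t : ℚ, p.eval t = l * t := by
  have hK' : (K : ℚ) ≠ 0 := by exact_mod_cast hK.ne'
  have key : ∀ k : ℕ, p.eval ((k : ℚ) * K) = k * p.eval (K : ℚ) ∧
      p.eval (((k : ℚ) + 1) * K) = (k + 1) * p.eval (K : ℚ) := by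
    intro k
    induction k with
    | zero => simp [h0]
    | succ k ih =>
      refine ⟨by push_cast; exact ih.2, ?_⟩
      have := h (k * K)
      push_cast at this
      rw [show (k : ℚ) * K + 2 * K = (k + 1 + 1) * K by ring,
        show (k : ℚ) * K + K = (k + 1) * K by ring, ih.1, ih.2] at this
      push_cast
      linarith
  have : p = Polynomial.C (p.eval (K : ℚ) / K) * Polynomial.X := by
    apply Polynomial.eq_of_infinite_eval_eq
    apply Set.Infinite.mono (s := Set.range (fun k : ℕ => (k : ℚ) * K))
    · rintro _ ⟨k, rfl⟩
      simp only [Set.mem_ofPred_eq, Polynomial.eval_mul, Polynomial.eval_C, Polynomial.eval_X]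
      rw [(key k).1]; field_simp
    · apply Set.infinite_range_of_injective
      intro a b hab
      have := mul_right_cancel₀ hK' hab
      exact_mod_cast this
  refine ⟨p.eval (K : ℚ) / K, fun t => ?_⟩
  conv_lhs => rw [this]
  simp

lemma poly_ext_int (p : Polynomial ℚ) (v : ℚ) (h : ∀ t : ℕ, 0 < t → p.eval (t : ℚ) = v) (t : ℚ) :
    p.eval t = v := by
  have : p = Polynomial.C v := by
    apply Polynomial.eq_of_infinite_eval_eq
    apply Set.Infinite.mono (s := Set.range (fun k : ℕ => ((k + 1 : ℕ) : ℚ)))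
    · rintro _ ⟨k, rfl⟩
      simp only [Set.mem_ofPred_eq, Polynomial.eval_C]
      exact h _ (Nat.succ_pos k)
    · apply Set.infinite_range_of_injective
      intro a b hab
      have hab' : ((a + 1 : ℕ) : ℚ) = ((b + 1 : ℕ) : ℚ) := hab
      have : a + 1 = b + 1 := by exact_mod_cast hab'
      omega
  rw [this]; simp

/-- number of lattice points with all functionals at most `T` -/
noncomputable def LL (W : Finset (ℤ × ℤ)) (T : ℤ) : ℤ :=
  ({x | ∀ n ∈ W, dz n x ≤ T} : Set (ℤ × ℤ)).ncard

lemma LL_step (W : Finset (ℤ × ℤ)) (ε : ℤ) (hε : ε ≠ 0) (hW : W.Nonempty)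
    (hfin : ∀ T : ℤ, ({x | ∀ n ∈ W, dz n x ≤ T} : Set (ℤ × ℤ)).Finite) (j : ℤ) (hj : 0 < j) :
    LL W j = LL W (j - 1) + ∑ n ∈ W, (({x | Cone W ε n x ∧ dz n x = j}).ncard : ℤ) := by
  classical
  have sub1 : ∀ n n' x, dz (n - n') x = dz n x - dz n' x := by intros; simp [dz]; ring
  set A := (hfin j).toFinset with hA
  have h1 : ∀ n ∈ W, ({x | Cone W ε n x ∧ dz n x = j}) =
      ((A.filter (fun x => Cone W ε n x ∧ dz n x = j) : Finset (ℤ × ℤ)) : Set (ℤ × ℤ)) := by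
    intro n hn
    ext x
    simp only [Finset.coe_filter, mem_ofPred_eq, hA, Set.Finite.mem_toFinset]
    constructor
    · rintro ⟨h, h'⟩
      refine ⟨?_, h, h'⟩
      intro n' hn'
      by_cases hne : n' = n
      · rw [hne]; omega
      · have := h n' hn' hne
        rw [sub1] at this
        omega
    · rintro ⟨_, h⟩; exact h
  have h2 : ∑ n ∈ W, (({x | Cone W ε n x ∧ dz n x = j}).ncard : ℤ) =
      ((W.biUnion (fun n => A.filter (fun x => Cone W ε n x ∧ dz n x = j))).card : ℤ) := by
    rw [Finset.card_biUnion]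
    · push_cast
      apply Finset.sum_congr rfl
      intro n hn
      rw [h1 n hn, Set.ncard_coe_finset]
    · intro n hn n' hn' hne
      change Disjoint _ _
      rw [Finset.disjoint_left]
      intro x hx hx'
      simp only [Finset.mem_filter] at hx hx'
      have hx0 : x ≠ 0 := by
        rintro rfl
        have := hx.2.2
        simp [dz] at this
        omega
      exact hne ((cone_unique W ε hε hW x hx0).unique ⟨hn, hx.2.1⟩ ⟨hn', hx'.2.1⟩)
  have hB : ({x | ∀ n ∈ W, dz n x ≤ j - 1} : Set (ℤ × ℤ)) = ((hfin (j - 1)).toFinset : Set _) := by simp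
  have hA' : ({x | ∀ n ∈ W, dz n x ≤ j} : Set (ℤ × ℤ)) = (A : Set _) := by simp [hA]
  rw [h2, LL, LL, hB, hA', Set.ncard_coe_finset, Set.ncard_coe_finset]
  rw [← Nat.cast_add, ← Finset.card_union_of_disjoint]
  · congr 2
    ext x
    simp only [Finset.mem_union, Finset.mem_biUnion, Finset.mem_filter, hA, Set.Finite.mem_toFinset,
      mem_ofPred_eq]
    constructor
    · intro h
      by_cases hlt : ∀ n ∈ W, dz n x ≤ j - 1
      · exact Or.inl hlt
      · right
        push Not at hlt
        obtain ⟨m, hm, hmj⟩ := hlt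
        have hx0 : x ≠ 0 := by
          rintro rfl
          simp [dz] at hmj
          omega
        obtain ⟨n, ⟨hn, hc⟩, _⟩ := cone_unique W ε hε hW x hx0
        refine ⟨n, hn, h, hc, ?_⟩
        have h3 := h n hn
        by_cases hne : m = n
        · rw [← hne] at h3 ⊢; omega
        · have := hc m hm hne
          rw [sub1] at this
          omega
    · rintro (h | ⟨n, hn, h, _⟩)
      · intro n hn; have := h n hn; omega
      · exact h
  · rw [Finset.disjoint_left]
    intro x hx hx'
    simp only [Finset.mem_biUnion, Finset.mem_filter, Set.Finite.mem_toFinset,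
      mem_ofPred_eq] at hx hx'
    obtain ⟨n, hn, _, _, h⟩ := hx'
    have := hx n hn
    omega

theorem core (W : Finset (ℤ × ℤ)) (D : ℤ) (hD : 0 < D)
    (hpos : ∀ x : ℤ × ℤ, x ≠ 0 → ∃ n ∈ W, 0 < dz n x)
    (hpq : ∀ n ∈ W, ∃ p q : ℚ × ℚ, p ≠ q ∧ n.1 * p.1 + n.2 * p.2 = D ∧
      n.1 * q.1 + n.2 * q.2 = D ∧
      ∀ n' ∈ W, n'.1 * p.1 + n'.2 * p.2 ≤ D ∧ n'.1 * q.1 + n'.2 * q.2 ≤ D)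
    (hfin : ∀ T : ℤ, ({x | ∀ n ∈ W, dz n x ≤ T} : Set (ℤ × ℤ)).Finite)
    (c : Polynomial ℚ) (hc : ∀ t : ℕ, 0 < t → (LL W (D * t) : ℚ) = c.eval (t : ℚ))
    (hi : ∀ x : ℤ × ℤ, (∀ n ∈ W, dz n x < D) → x = 0) :
    ∀ n ∈ W, ∃ u : ℤ × ℤ, IsCoprime u.1 u.2 ∧ n = (D * u.1, D * u.2) := by
  classical
  have hW : W.Nonempty := by
    obtain ⟨n, hn, _⟩ := hpos (1, 0) (by simp)
    exact ⟨n, hn⟩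
  have hcount := fun n hn => cone_count W D hD hpos n hn (hpq n hn)
  choose! d u α β hd hu hnd hαβ hplus hminus using hcount
  set Mt : ℤ → ℤ := fun j => ∑ n ∈ W, if d n ∣ j then ⌈β n * j⌉ - ⌈α n * j⌉ else 0 with hMt
  -- step formulas
  have stepP : ∀ j : ℤ, 0 < j → LL W j = LL W (j - 1) + Mt j := by
    intro j hj
    rw [LL_step W 1 (by norm_num) hW hfin j hj]
    congr 1
    exact Finset.sum_congr rfl (fun n hn => hplus n hn j hj)
  have stepN : ∀ j : ℤ, 0 < j → LL W j = LL W (j - 1) - Mt (-j) := by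
    intro j hj
    rw [LL_step W (-1) (by norm_num) hW hfin j hj, sub_eq_add_neg]
    congr 1
    rw [hMt]
    simp only
    rw [← Finset.sum_neg_distrib]
    apply Finset.sum_congr rfl
    intro n hn
    rw [hminus n hn j hj]
    simp only [dvd_neg]
    split_ifs
    · push_cast
      rw [mul_neg, mul_neg, Int.ceil_neg, Int.ceil_neg]; ring
    · simp
  have Mt0 : Mt 0 = 0 := by simp [hMt]
  have LL0 : LL W 0 = 1 := by
    have : ({x | ∀ n ∈ W, dz n x ≤ 0} : Set (ℤ × ℤ)) = {0} := by
      ext x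
      simp only [mem_ofPred_eq, mem_singleton_iff]
      constructor
      · intro h
        by_contra hx
        obtain ⟨n, hn, h'⟩ := hpos x hx
        have := h n hn; omega
      · rintro rfl n hn; simp [dz]
    rw [LL, this]; simp
  have LLD : LL W (D - 1) = 1 := by
    have : ({x | ∀ n ∈ W, dz n x ≤ D - 1} : Set (ℤ × ℤ)) = {0} := by
      ext x
      simp only [mem_ofPred_eq, mem_singleton_iff]
      constructor
      · intro h
        exact hi x (fun n hn => by have := h n hn; omega)
      · rintro rfl n hn; simp [dz]; omega
    rw [LL, this]; simp
  have LLmono : ∀ S T : ℤ, S ≤ T → LL W S ≤ LL W T := by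
    intro S T h
    unfold LL
    have hsub : ({x | ∀ n ∈ W, dz n x ≤ S} : Set (ℤ × ℤ)) ⊆ {x | ∀ n ∈ W, dz n x ≤ T} := by
      intro x hx
      simp only [mem_ofPred_eq] at hx ⊢
      exact fun n hn => (hx n hn).trans h
    exact_mod_cast Set.ncard_le_ncard hsub (hfin T)
  -- the common period
  obtain ⟨K, hK, hNd, hNα, hNβ⟩ : ∃ K : ℕ, 0 < K ∧ (∀ n ∈ W, d n ∣ D * K) ∧
      (∀ n ∈ W, ∃ a : ℤ, α n * (D * K) = a) ∧ (∀ n ∈ W, ∃ a : ℤ, β n * (D * K) = a) := by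
    refine ⟨∏ n ∈ W, ((d n).natAbs * (α n).den * (β n).den), ?_, ?_, ?_, ?_⟩
    · apply Finset.prod_pos
      intro n hn
      have := hd n hn
      have := (α n).den_pos
      have := (β n).den_pos
      have : 0 < (d n).natAbs := by omega
      positivity
    · intro n hn
      apply Dvd.dvd.mul_left
      have h1 : (d n).natAbs ∣ ∏ n ∈ W, ((d n).natAbs * (α n).den * (β n).den) :=
        Dvd.dvd.trans ⟨(α n).den * (β n).den, by ring⟩
          (Finset.dvd_prod_of_mem (fun n => (d n).natAbs * (α n).den * (β n).den) hn)
      exact Int.natAbs_dvd.1 (Int.natCast_dvd_natCast.2 h1)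
    · intro n hn
      have h1 : (α n).den ∣ ∏ n ∈ W, ((d n).natAbs * (α n).den * (β n).den) :=
        Dvd.dvd.trans ⟨(d n).natAbs * (β n).den, by ring⟩
          (Finset.dvd_prod_of_mem (fun n => (d n).natAbs * (α n).den * (β n).den) hn)
      obtain ⟨k, hk⟩ := h1
      rw [hk]
      refine ⟨D * k * (α n).num, ?_⟩
      push_cast
      have := Rat.mul_den_eq_num (α n)
      linear_combination (D : ℚ) * k * this
    · intro n hn
      have h1 : (β n).den ∣ ∏ n ∈ W, ((d n).natAbs * (α n).den * (β n).den) :=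
        Dvd.dvd.trans ⟨(d n).natAbs * (α n).den, by ring⟩
          (Finset.dvd_prod_of_mem (fun n => (d n).natAbs * (α n).den * (β n).den) hn)
      obtain ⟨k, hk⟩ := h1
      rw [hk]
      refine ⟨D * k * (β n).num, ?_⟩
      push_cast
      have := Rat.mul_den_eq_num (β n)
      linear_combination (D : ℚ) * k * this
  set N : ℤ := D * K with hN
  have hKQ : (0:ℚ) < K := by exact_mod_cast hK
  have hNpos : 0 < N := by rw [hN]; positivity
  have incr : ∀ j : ℤ, (Mt (j + N) : ℚ) - Mt j =
      ∑ n ∈ W, if d n ∣ j then (β n - α n) * N else 0 := by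
    intro j
    simp only [hMt]
    push_cast
    rw [← Finset.sum_sub_distrib]
    apply Finset.sum_congr rfl
    intro n hn
    have e : d n ∣ j + N ↔ d n ∣ j := (Int.dvd_add_left (hNd n hn))
    simp only [e]
    split_ifs
    · obtain ⟨a, ha⟩ := hNα n hn
      obtain ⟨b, hb⟩ := hNβ n hn
      have ha' : α n * (N : ℚ) = a := by rw [← ha, hN]; push_cast; ring
      have hb' : β n * (N : ℚ) = b := by rw [← hb, hN]; push_cast; ring
      rw [mul_add, mul_add, ha', hb', Int.ceil_add_intCast, Int.ceil_add_intCast, sub_mul, ha', hb']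
      push_cast; ring
    · simp
  have incr2 : ∀ j : ℤ, Mt (j + 2 * N) - 2 * Mt (j + N) + Mt j = 0 := by
    intro j
    have h1 := incr j
    have h2 := incr (j + N)
    have : ∀ n ∈ W, (d n ∣ j + N ↔ d n ∣ j) := fun n hn => (Int.dvd_add_left (hNd n hn))
    rw [Finset.sum_congr rfl (fun n hn => by rw [if_congr (this n hn) rfl rfl]), ← h1] at h2
    rw [show j + N + N = j + 2 * N by ring] at h2
    have : (Mt (j + 2 * N) : ℚ) - 2 * Mt (j + N) + Mt j = 0 := by linarith
    exact_mod_cast this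
  -- two-sided extension
  set F : ℤ → ℤ := fun T => if 0 ≤ T then LL W T else LL W (-T - 1) with hF
  have Fstep : ∀ T : ℤ, F T = F (T - 1) + Mt T := by
    intro T
    rcases lt_trichotomy T 0 with h | h | h
    · simp only [hF]
      rw [if_neg (by omega), if_neg (by omega)]
      have := stepN (-T) (by omega)
      rw [neg_neg] at this
      rw [show -(T - 1) - 1 = -T by ring]; omega
    · subst h; simp [hF, Mt0]
    · simp only [hF]
      rw [if_pos (by omega), if_pos (by omega)]
      exact stepP T h
  have Econst : ∀ T : ℤ, F (T + 2 * N) - 2 * F (T + N) + F T = F (2 * N) - 2 * F N + F 0 := by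
    intro T
    induction T using Int.induction_on with
    | zero => simp
    | succ i ih =>
      have h1 := Fstep (i + 1 + 2 * N)
      have h2 := Fstep (i + 1 + N)
      have h3 := Fstep (i + 1)
      have h4 := incr2 (i + 1)
      rw [show (i : ℤ) + 1 + 2 * N - 1 = i + 2 * N by ring] at h1
      rw [show (i : ℤ) + 1 + N - 1 = i + N by ring] at h2
      rw [show (i : ℤ) + 1 - 1 = i by ring] at h3
      linarith
    | pred i ih =>
      have h1 := Fstep (-i + 2 * N)
      have h2 := Fstep (-i + N)
      have h3 := Fstep (-i)
      have h4 := incr2 (-i)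
      rw [show -(i : ℤ) + 2 * N - 1 = -i - 1 + 2 * N by ring] at h1
      rw [show -(i : ℤ) + N - 1 = -i - 1 + N by ring] at h2
      linarith
  set κ : ℤ := F (2 * N) - 2 * F N + F 0 with hκ
  have Fc : ∀ t : ℕ, 0 < t → (F (D * t) : ℚ) = c.eval (t : ℚ) := by
    intro t ht
    rw [← hc t ht]
    simp only [hF]
    rw [if_pos (by positivity)]
  have cdiff : ∀ t : ℚ, c.eval (t + 2 * K) - 2 * c.eval (t + K) + c.eval t = κ := by
    intro t
    have := poly_ext_int (c.comp (Polynomial.X + Polynomial.C (2 * (K : ℚ))) -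
      2 * c.comp (Polynomial.X + Polynomial.C (K : ℚ)) + c) κ (by
        intro t ht
        have h1 := Fc t ht
        have h2 := Fc (t + K) (by omega)
        have h3 := Fc (t + 2 * K) (by omega)
        have h4 := Econst (D * t)
        push_cast at h1 h2 h3
        rw [show D * ((t:ℤ) + 2 * K) = D * t + 2 * N by rw [hN]; ring] at h3
        rw [show D * ((t:ℤ) + K) = D * t + N by rw [hN]; ring] at h2
        simp [Polynomial.eval_comp]
        rw [← h1, ← h2, ← h3]
        have h5 : (F (D * t + 2 * N) : ℚ) - 2 * F (D * t + N) + F (D * t) = κ := by exact_mod_cast h4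
        linarith) t
    simpa [Polynomial.eval_comp] using this
  have Fall : ∀ m : ℕ, ∀ t : ℤ, -(m : ℤ) < t → (F (D * t) : ℚ) = c.eval (t : ℚ) := by
    intro m
    induction m with
    | zero =>
      intro t ht
      obtain ⟨k, rfl⟩ := Int.eq_ofNat_of_zero_le (show 0 ≤ t by simp at ht; omega)
      exact Fc k (by simp at ht; omega)
    | succ m ih =>
      intro t ht
      push_cast at ht
      have h1 := ih (t + K) (by omega)
      have h2 := ih (t + 2 * K) (by omega)
      have h3 := Econst (D * t)
      have h4 := cdiff t
      push_cast at h1 h2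
      rw [show D * ((t:ℤ) + 2 * K) = D * t + 2 * N by rw [hN]; ring] at h2
      rw [show D * ((t:ℤ) + K) = D * t + N by rw [hN]; ring] at h1
      have h5 : (F (D * t + 2 * N) : ℚ) - 2 * F (D * t + N) + F (D * t) = κ := by exact_mod_cast h3
      linarith
  have Fz : ∀ t : ℤ, (F (D * t) : ℚ) = c.eval (t : ℚ) := fun t => Fall (t.natAbs + 1) t (by omega)
  have c0 : c.eval 0 = 1 := by
    have := Fz 0
    simp [hF, LL0] at this
    exact this.symm
  have c1 : c.eval (-1) = 1 := by
    have := Fz (-1)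
    simp only [hF] at this
    rw [if_neg (by linarith), show -(D * -1) - 1 = D - 1 by ring, LLD] at this
    simpa using this.symm
  -- linear differences
  obtain ⟨l, hl⟩ := poly_linear (c - c.comp (Polynomial.X - 1)) K hK (by
    intro t
    have h1 := cdiff t
    have h2 := cdiff (t - 1)
    simp only [Polynomial.eval_comp, Polynomial.eval_sub, Polynomial.eval_X, Polynomial.eval_one]
    rw [show (t:ℚ) + 2 * K - 1 = t - 1 + 2 * K by ring, show (t:ℚ) + K - 1 = t - 1 + K by ring]
    linarith) (by simp [Polynomial.eval_comp, c0, c1])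
  obtain ⟨l', hl'⟩ := poly_linear (c.comp (-Polynomial.X) - c.comp (Polynomial.X - 1)) K hK (by
    intro t
    have h1 := cdiff (-t - 2 * K)
    have h2 := cdiff (t - 1)
    simp only [Polynomial.eval_comp, Polynomial.eval_sub, Polynomial.eval_X, Polynomial.eval_one,
      Polynomial.eval_neg]
    rw [show (t:ℚ) + 2 * K - 1 = t - 1 + 2 * K by ring, show (t:ℚ) + K - 1 = t - 1 + K by ring,
      show -((t:ℚ) + 2 * K) = -t - 2 * K by ring, show -((t:ℚ) + K) = -t - 2 * K + K by ring]
    rw [show -(t:ℚ) - 2 * K + 2 * K = -t by ring] at h1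
    linarith) (by simp [Polynomial.eval_comp, c0, c1])
  simp only [Polynomial.eval_comp, Polynomial.eval_sub, Polynomial.eval_X, Polynomial.eval_one,
      Polynomial.eval_neg] at hl hl'
  have hl'0 : l' = 0 := by
    have := hl' 1
    simp [c0, c1] at this
    exact this.symm
  have recip : ∀ t : ℤ, 0 < t → LL W (D * t - 1) = LL W (D * (t - 1)) := by
    intro t ht
    have h1 := Fz (-t)
    have h2 := Fz (t - 1)
    have h3 := hl' t
    rw [hl'0] at h3
    push_cast at h1 h2
    have hDt : 0 < D * t := mul_pos hD ht
    have hDt' : 0 ≤ D * (t - 1) := mul_nonneg hD.le (by omega)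
    have h4 : F (D * -t) = F (D * (t - 1)) := by
      have : (F (D * -t) : ℚ) = F (D * (t - 1)) := by rw [h1, h2]; linarith
      exact_mod_cast this
    simp only [hF] at h4
    rw [if_neg (by linarith), if_pos hDt'] at h4
    rw [← h4]; congr 1; ring
  have Mzero : ∀ j : ℤ, 0 < j → ¬ D ∣ j → Mt j = 0 := by
    intro j hj hdj
    have h1 := Int.emod_add_mul_ediv j D
    have h2 := Int.emod_nonneg j hD.ne'
    have h3 := Int.emod_lt_of_pos j hD
    have h4 : j % D ≠ 0 := fun h => hdj (Int.dvd_of_emod_eq_zero h)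
    have h5 : 0 ≤ j / D := Int.ediv_nonneg hj.le hD.le
    have h6 := recip (j / D + 1) (by omega)
    rw [show D * (j / D + 1) = D * (j / D) + D by ring, show j / D + 1 - 1 = j / D by ring] at h6
    have h7 := stepP j hj
    have h8 := LLmono (D * (j / D)) (j - 1) (by omega)
    have h9 := LLmono j (D * (j / D) + D - 1) (by omega)
    have h10 := LLmono (j - 1) j (by omega)
    omega
  have Mlin : ∀ t : ℤ, 0 < t → (Mt (D * t) : ℚ) = l * t := by
    intro t ht
    have hDt : 0 < D * t := mul_pos hD ht
    have hDt' : 0 ≤ D * (t - 1) := mul_nonneg hD.le (by omega)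
    have h1 := stepP (D * t) hDt
    rw [recip t ht] at h1
    have h2 := Fz t
    have h3 := Fz (t - 1)
    simp only [hF] at h2 h3
    rw [if_pos hDt.le] at h2
    rw [if_pos hDt'] at h3
    push_cast at h3
    rw [← hl t, ← h2, ← h3, h1]
    push_cast; ring
  have hterm : ∀ n ∈ W, 0 < (β n - α n) * (N : ℚ) := fun n hn =>
    mul_pos (sub_pos.2 (hαβ n hn)) (by exact_mod_cast hNpos)
  have dvd1 : ∀ n ∈ W, D ∣ d n := by
    intro n hn
    by_contra hcon
    have h1 := Mzero (d n) (hd n hn) hcon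
    have h2 := Mzero (d n + N) (by have := hd n hn; omega) (by
      rw [Int.dvd_add_left ⟨_, hN⟩]; exact hcon)
    have h3 := incr (d n)
    rw [h1, h2] at h3
    have h4 : 0 < ∑ m ∈ W, (if d m ∣ d n then (β m - α m) * (N : ℚ) else 0) := by
      apply Finset.sum_pos'
      · intro m hm
        split_ifs
        · exact (hterm m hm).le
        · exact le_rfl
      · exact ⟨n, hn, by simpa using hterm n hn⟩
    rw [← h3] at h4
    simp at h4
  have dvd2 : ∀ n ∈ W, d n ∣ D := by
    intro n hn
    by_contra hcon
    have h1 := incr N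
    have h2 := incr D
    have h3 : (Mt (N + N) : ℚ) - Mt N = Mt (D + N) - Mt D := by
      have e1 := Mlin (K + K) (by omega)
      have e2 := Mlin K (by omega)
      have e3 := Mlin (1 + K) (by omega)
      have e4 := Mlin 1 (by omega)
      rw [show D * ((K:ℤ) + K) = N + N by rw [hN]; ring] at e1
      rw [← hN] at e2
      rw [show D * (1 + (K:ℤ)) = D + N by rw [hN]; ring] at e3
      rw [mul_one] at e4
      rw [e1, e2, e3, e4]; push_cast; ring
    rw [h1, h2] at h3
    have h4 : ∑ m ∈ W, (if d m ∣ D then (β m - α m) * (N : ℚ) else 0) <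
        ∑ m ∈ W, (if d m ∣ N then (β m - α m) * (N : ℚ) else 0) := by
      apply Finset.sum_lt_sum
      · intro m hm
        rw [if_pos (hNd m hm)]
        split_ifs
        · exact le_rfl
        · exact (hterm m hm).le
      · refine ⟨n, hn, ?_⟩
        rw [if_pos (hNd n hn), if_neg hcon]
        exact hterm n hn
    exact h4.ne h3.symm
  intro n hn
  refine ⟨u n, hu n hn, ?_⟩
  have : d n = D := Int.dvd_antisymm (hd n hn).le hD.le (dvd2 n hn) (dvd1 n hn)
  rw [← this]
  exact hnd n hn

/-- dot product as a continuous linear map in the second variable -/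
noncomputable def dotL (u : ℝ × ℝ) : (ℝ × ℝ) →L[ℝ] ℝ :=
  u.1 • ContinuousLinearMap.fst ℝ ℝ ℝ + u.2 • ContinuousLinearMap.snd ℝ ℝ ℝ

lemma dotL_apply (u a : ℝ × ℝ) : dotL u a = dotR u a := by simp [dotL, dotR]

lemma dotR_comm (u a : ℝ × ℝ) : dotR u a = dotR a u := by simp [dotR]; ring

lemma clm_eq (l : (ℝ × ℝ) →L[ℝ] ℝ) (x : ℝ × ℝ) : l x = dotR (l (1, 0), l (0, 1)) x := by
  have : x = x.1 • ((1, 0) : ℝ × ℝ) + x.2 • ((0, 1) : ℝ × ℝ) := by ext <;> simp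
  conv_lhs => rw [this]
  rw [map_add, map_smul, map_smul]
  simp [dotR]; ring

lemma dot_unique (u u' a b : ℝ × ℝ) (hab : a.1 * b.2 - a.2 * b.1 ≠ 0)
    (h1 : dotR u a = dotR u' a) (h2 : dotR u b = dotR u' b) : u = u' := by
  unfold dotR at h1 h2
  apply Prod.ext
  · apply mul_right_cancel₀ hab
    linear_combination b.2 * h1 - a.2 * h2
  · apply mul_right_cancel₀ hab
    linear_combination -b.1 * h1 + a.1 * h2

lemma det_of_tight (u a b : ℝ × ℝ) (h1 : dotR u a = 1) (h2 : dotR u b = 1) (hne : a ≠ b) :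
    a.1 * b.2 - a.2 * b.1 ≠ 0 := by
  intro h
  apply hne
  unfold dotR at h1 h2
  apply Prod.ext
  · linear_combination u.2 * h - a.1 * h2 + b.1 * h1
  · linear_combination -u.1 * h - a.2 * h2 + b.2 * h1

/-- The polar dual -/
def polarD (P : Set (ℝ × ℝ)) : Set (ℝ × ℝ) := {u | ∀ a ∈ P, dotR u a ≤ 1}

lemma mem_polarD {P : Set (ℝ × ℝ)} {u : ℝ × ℝ} : u ∈ polarD P ↔ ∀ a ∈ P, dotR u a ≤ 1 := Iff.rfl

lemma convex_half (u : ℝ × ℝ) (r : ℝ) : Convex ℝ {a | dotR u a ≤ r} := by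
  have := convex_halfSpace_le (𝕜 := ℝ) (f := fun a => dotR u a)
    ⟨fun x y => by simp [dotR]; ring, fun c x => by simp [dotR]; ring⟩ r
  exact this

lemma closed_half (u : ℝ × ℝ) (r : ℝ) : IsClosed {a | dotR u a ≤ r} := by
  apply isClosed_le _ continuous_const
  unfold dotR; fun_prop

lemma polar_hull (S : Set (ℝ × ℝ)) (u : ℝ × ℝ) :
    u ∈ polarD (convexHull ℝ S) ↔ ∀ a ∈ S, dotR u a ≤ 1 := by
  constructor
  · intro h a ha; exact h a (subset_convexHull ℝ S ha)
  · intro h a ha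
    exact convexHull_min (t := {a | dotR u a ≤ 1}) (fun a ha => h a ha) (convex_half u 1) ha

lemma exists_eps (P : Set (ℝ × ℝ)) (h0 : (0 : ℝ × ℝ) ∈ interior P) :
    ∃ ε : ℝ, 0 < ε ∧ ∀ x : ℝ × ℝ, |x.1| ≤ ε → |x.2| ≤ ε → x ∈ P := by
  rw [mem_interior_iff_mem_nhds, Metric.mem_nhds_iff] at h0
  obtain ⟨ε, hε, h⟩ := h0
  refine ⟨ε / 2, by linarith, fun x h1 h2 => h ?_⟩
  rw [mem_ball_zero_iff, Prod.norm_def]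
  simp only [Real.norm_eq_abs]
  exact max_lt (by linarith) (by linarith)

lemma polar_compact (P : Set (ℝ × ℝ)) (h0 : (0 : ℝ × ℝ) ∈ interior P) :
    IsCompact (polarD P) := by
  obtain ⟨ε, hε, h⟩ := exists_eps P h0
  apply IsCompact.of_isClosed_subset (isCompact_Icc (a := ((-1/ε, -1/ε) : ℝ × ℝ)) (b := (1/ε, 1/ε)))
  · have : polarD P = ⋂ a ∈ P, {u | dotR a u ≤ 1} := by
      ext u; simp [polarD, dotR_comm]
    rw [this]
    exact isClosed_biInter (fun a _ => closed_half a 1)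
  · intro u hu
    have a1 := hu (ε, 0) (h _ (by simp [abs_of_pos hε]) (by simp [hε.le]))
    have a2 := hu (-ε, 0) (h _ (by simp [abs_of_pos hε]) (by simp [hε.le]))
    have a3 := hu (0, ε) (h _ (by simp [hε.le]) (by simp [abs_of_pos hε]))
    have a4 := hu (0, -ε) (h _ (by simp [hε.le]) (by simp [abs_of_pos hε]))
    simp [dotR] at a1 a2 a3 a4
    refine ⟨⟨?_, ?_⟩, ⟨?_, ?_⟩⟩ <;> simp only
    · rw [div_le_iff₀ hε]; linarith
    · rw [div_le_iff₀ hε]; linarith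
    · rw [le_div_iff₀ hε]; linarith
    · rw [le_div_iff₀ hε]; linarith

lemma polar_convex (P : Set (ℝ × ℝ)) : Convex ℝ (polarD P) := by
  have : polarD P = ⋂ a ∈ P, {u | dotR a u ≤ 1} := by
    ext u; simp [polarD, dotR_comm]
  rw [this]
  exact convex_iInter₂ (fun a _ => convex_half a 1)

lemma ext_of_tight (P : Set (ℝ × ℝ)) (u a b : ℝ × ℝ) (hu : u ∈ polarD P) (ha : a ∈ P) (hb : b ∈ P)
    (h1 : dotR u a = 1) (h2 : dotR u b = 1) (hne : a ≠ b) : u ∈ (polarD P).extremePoints ℝ := by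
  have hdet := det_of_tight u a b h1 h2 hne
  rw [mem_extremePoints_iff_left]
  refine ⟨hu, ?_⟩
  rintro u1 hu1 u2 hu2 ⟨s, t, hs, ht, hst, rfl⟩
  have lin : ∀ x, dotR (s • u1 + t • u2) x = s * dotR u1 x + t * dotR u2 x := by
    intro x; simp [dotR]; ring
  have key : ∀ x ∈ P, dotR (s • u1 + t • u2) x = 1 → dotR u1 x = 1 := by
    intro x hx h
    rw [lin] at h
    have e1 := hu1 x hx
    have e2 := hu2 x hx
    nlinarith
  exact dot_unique _ _ a b hdet ((key a ha h1).trans h1.symm) ((key b hb h2).trans h2.symm)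

lemma tight_of_ext (V : Finset (ℚ × ℚ)) (w : ℝ × ℝ)
    (hw : w ∈ (polarD (convexHull ℝ (qpt '' (V : Set (ℚ × ℚ))))).extremePoints ℝ) :
    ∃ v ∈ V, ∃ v' ∈ V, dotR w (qpt v) = 1 ∧ dotR w (qpt v') = 1 ∧
      v.1 * v'.2 - v.2 * v'.1 ≠ 0 := by
  classical
  by_contra hcon
  push Not at hcon
  obtain ⟨z, hz, hperp⟩ : ∃ z : ℝ × ℝ, z ≠ 0 ∧ ∀ v ∈ V, dotR w (qpt v) = 1 → dotR z (qpt v) = 0 := by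
    by_cases hex : ∃ v ∈ V, dotR w (qpt v) = 1
    · obtain ⟨v, hv, h1⟩ := hex
      refine ⟨(-(qpt v).2, (qpt v).1), ?_, ?_⟩
      · intro h
        simp only [Prod.mk_eq_zero, neg_eq_zero] at h
        simp [dotR, h.1, h.2] at h1
      · intro v' hv' h1'
        have := hcon v hv v' hv' h1 h1'
        have h2 : (v.1 : ℝ) * v'.2 - v.2 * v'.1 = 0 := by exact_mod_cast this
        simp only [dotR, qpt]; linarith
    · push Not at hex
      exact ⟨(1, 0), by simp, fun v hv h => absurd h (hex v hv)⟩
  rw [mem_extremePoints_iff_left] at hw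
  obtain ⟨hw1, hw2⟩ := hw
  rw [polar_hull] at hw1
  have hw1' : ∀ v ∈ V, dotR w (qpt v) ≤ 1 := fun v hv => hw1 _ ⟨v, hv, rfl⟩
  obtain ⟨ε, hε, hεs⟩ : ∃ ε : ℝ, 0 < ε ∧ ∀ v ∈ V, dotR w (qpt v) + ε * |dotR z (qpt v)| ≤ 1 := by
    clear hcon hw1 hw2
    induction V using Finset.induction_on with
    | empty => exact ⟨1, one_pos, by simp⟩
    | insert v V hvV ih =>
      obtain ⟨ε, hε, h⟩ := ih (fun v hv => hperp v (Finset.mem_insert_of_mem hv))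
        (fun v hv => hw1' v (Finset.mem_insert_of_mem hv))
      have hv1 := hw1' v (Finset.mem_insert_self _ _)
      rcases hv1.lt_or_eq with hlt | heq
      · have hp : 0 < |dotR z (qpt v)| + 1 := by positivity
        refine ⟨min ε ((1 - dotR w (qpt v)) / (|dotR z (qpt v)| + 1)),
          lt_min hε (div_pos (by linarith) hp), ?_⟩
        intro v' hv'
        rcases Finset.mem_insert.1 hv' with rfl | hv'
        · have : min ε ((1 - dotR w (qpt v')) / (|dotR z (qpt v')| + 1)) * |dotR z (qpt v')| ≤
            (1 - dotR w (qpt v')) / (|dotR z (qpt v')| + 1) * (|dotR z (qpt v')| + 1) := by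
            apply mul_le_mul (min_le_right _ _) (by linarith) (abs_nonneg _)
            exact (div_pos (by linarith) hp).le
          rw [div_mul_cancel₀ _ hp.ne'] at this
          linarith
        · have h1 := h v' hv'
          have : min ε ((1 - dotR w (qpt v)) / (|dotR z (qpt v)| + 1)) * |dotR z (qpt v')| ≤
            ε * |dotR z (qpt v')| := by
            apply mul_le_mul_of_nonneg_right (min_le_left _ _) (abs_nonneg _)
          linarith
      · refine ⟨ε, hε, ?_⟩
        intro v' hv'
        rcases Finset.mem_insert.1 hv' with rfl | hv'
        · rw [hperp v' (Finset.mem_insert_self _ _) heq, heq]; simp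
        · exact h v' hv'
  have mem : ∀ s : ℝ, |s| = ε → w + s • z ∈ polarD (convexHull ℝ (qpt '' (V : Set (ℚ × ℚ)))) := by
    intro s hs
    rw [polar_hull]
    rintro _ ⟨v, hv, rfl⟩
    have h1 := hεs v hv
    have h2 : dotR (w + s • z) (qpt v) = dotR w (qpt v) + s * dotR z (qpt v) := by
      simp [dotR]; ring
    rw [h2]
    have h3 := le_abs_self (s * dotR z (qpt v))
    rw [abs_mul, hs] at h3
    linarith
  have := hw2 (w + ε • z) (mem ε (abs_of_pos hε)) (w + (-ε) • z) (mem (-ε) (by rw [abs_neg, abs_of_pos hε]))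
    ⟨1/2, 1/2, by norm_num, by norm_num, by norm_num, by ext <;> simp <;> ring⟩
  have h3 : ε • z = 0 := by simpa using this
  rcases smul_eq_zero.1 h3 with h | h
  · exact hε.ne' h
  · exact hz h

theorem geom (P : Set (ℝ × ℝ)) (V : Finset (ℚ × ℚ))
    (hP : P = convexHull ℝ (qpt '' (V : Set (ℚ × ℚ)))) (h0 : (0 : ℝ × ℝ) ∈ interior P) :
    ∃ W : Finset (ℚ × ℚ), polarD P = convexHull ℝ (qpt '' (W : Set (ℚ × ℚ))) ∧
      (polarD P).extremePoints ℝ = qpt '' (W : Set (ℚ × ℚ)) ∧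
      (∀ x, x ∈ P ↔ ∀ w ∈ W, dotR (qpt w) x ≤ 1) ∧
      (∀ x, x ∈ interior P ↔ ∀ w ∈ W, dotR (qpt w) x < 1) ∧
      (∀ w ∈ W, ∃ v ∈ V, ∃ v' ∈ V, dotR (qpt w) (qpt v) = 1 ∧ dotR (qpt w) (qpt v') = 1 ∧
        v.1 * v'.2 - v.2 * v'.1 ≠ 0) := by
  classical
  have hsub : (polarD P).extremePoints ℝ ⊆ qpt '' ((V ×ˢ V).image (fun p : (ℚ × ℚ) × (ℚ × ℚ) =>
      (((p.2.2 - p.1.2) / (p.1.1 * p.2.2 - p.1.2 * p.2.1),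
        (p.1.1 - p.2.1) / (p.1.1 * p.2.2 - p.1.2 * p.2.1)) : ℚ × ℚ)) : Finset (ℚ × ℚ)) := by
    intro w hw
    rw [hP] at hw
    obtain ⟨v, hv, v', hv', h1, h2, hdet⟩ := tight_of_ext V w hw
    refine ⟨_, Finset.mem_coe.2 (Finset.mem_image_of_mem _ (Finset.mk_mem_product hv hv')), ?_⟩
    have hdet' : (v.1 : ℝ) * v'.2 - v.2 * v'.1 ≠ 0 := by exact_mod_cast hdet
    simp only [dotR, qpt] at h1 h2
    apply Prod.ext
    · simp only [qpt]; push_cast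
      rw [div_eq_iff hdet']
      linear_combination -(v'.2 : ℝ) * h1 + v.2 * h2
    · simp only [qpt]; push_cast
      rw [div_eq_iff hdet']
      linear_combination (v'.1 : ℝ) * h1 - v.1 * h2
  obtain ⟨W, hW⟩ : ∃ W : Finset (ℚ × ℚ), (polarD P).extremePoints ℝ = qpt '' (W : Set (ℚ × ℚ)) := by
    obtain ⟨X, hsub⟩ : ∃ X : Finset (ℚ × ℚ),
        (polarD P).extremePoints ℝ ⊆ qpt '' (X : Set (ℚ × ℚ)) := ⟨_, hsub⟩
    refine ⟨X.filter (fun q => qpt q ∈ (polarD P).extremePoints ℝ), ?_⟩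
    ext w
    constructor
    · intro hw
      obtain ⟨q, hq, rfl⟩ := hsub hw
      exact ⟨q, by rw [Finset.mem_coe, Finset.mem_filter]; exact ⟨hq, hw⟩, rfl⟩
    · rintro ⟨q, hq, rfl⟩
      rw [Finset.mem_coe, Finset.mem_filter] at hq
      exact hq.2
  have hpol : polarD P = convexHull ℝ (qpt '' (W : Set (ℚ × ℚ))) := by
    have h1 := closure_convexHull_extremePoints (polar_compact P h0) (polar_convex P)
    rw [hW] at h1
    rw [← h1]
    exact (Set.Finite.isClosed_convexHull (𝕜 := ℝ) (W.finite_toSet.image qpt)).closure_eq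
  have hWpol : ∀ w ∈ W, qpt w ∈ polarD P := by
    intro w hw
    have : qpt w ∈ (polarD P).extremePoints ℝ := by rw [hW]; exact ⟨w, hw, rfl⟩
    exact this.1
  have hmem : ∀ x, x ∈ P ↔ ∀ w ∈ W, dotR (qpt w) x ≤ 1 := by
    intro x
    constructor
    · intro hx w hw; exact hWpol w hw x hx
    · intro h
      by_contra hx
      have hclosed : IsClosed P := by
        rw [hP]; exact Set.Finite.isClosed_convexHull (𝕜 := ℝ) (V.finite_toSet.image qpt)
      have hconv : Convex ℝ P := by rw [hP]; exact convex_convexHull ℝ _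
      obtain ⟨f, s, h1, h2⟩ := geometric_hahn_banach_closed_point hconv hclosed hx
      have hs : 0 < s := by simpa using h1 0 (interior_subset h0)
      have hu : ((f (1, 0) / s, f (0, 1) / s) : ℝ × ℝ) ∈ polarD P := by
        intro a ha
        have := h1 a ha
        rw [clm_eq] at this
        simp only [dotR] at this ⊢
        rw [div_mul_eq_mul_div, div_mul_eq_mul_div, ← add_div, div_le_one hs]
        exact this.le
      rw [hpol] at hu
      have := convexHull_min (t := {a | dotR x a ≤ 1}) (by
        rintro _ ⟨w, hw, rfl⟩
        change dotR x (qpt w) ≤ 1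
        rw [dotR_comm]; exact h w hw) (convex_half x 1) hu
      change dotR x _ ≤ 1 at this
      rw [clm_eq] at h2
      rw [dotR_comm] at this
      simp only [dotR] at this h2
      rw [div_mul_eq_mul_div, div_mul_eq_mul_div, ← add_div, div_le_one hs] at this
      linarith
  refine ⟨W, hpol, hW, hmem, ?_, ?_⟩
  · intro x
    constructor
    · intro hx w hw
      have hcont : ContinuousAt (fun t : ℝ => t • x) 1 := by fun_prop
      have hnb : P ∈ nhds ((1 : ℝ) • x) := by
        rw [one_smul]; exact mem_interior_iff_mem_nhds.1 hx
      have := hcont.preimage_mem_nhds hnb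
      rw [Metric.mem_nhds_iff] at this
      obtain ⟨ε, hε, hb⟩ := this
      have h1 : (1 + ε / 2) • x ∈ P := hb (by
        rw [Metric.mem_ball, Real.dist_eq]; rw [show 1 + ε/2 - 1 = ε / 2 by ring, abs_of_pos (by linarith)]; linarith)
      have h2 := (hmem _).1 h1 w hw
      have h3 : dotR (qpt w) ((1 + ε / 2) • x) = (1 + ε / 2) * dotR (qpt w) x := by
        simp [dotR]; ring
      rw [h3] at h2
      by_contra hge
      push Not at hge
      nlinarith
    · intro h
      rw [mem_interior]
      refine ⟨⋂ w ∈ W, {x | dotR (qpt w) x < 1}, ?_, ?_, ?_⟩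
      · intro y hy
        rw [hmem]
        intro w hw
        have := Set.mem_iInter₂.1 hy w hw
        exact le_of_lt this
      · apply isOpen_biInter_finset
        intro w hw
        apply isOpen_lt _ continuous_const
        unfold dotR; fun_prop
      · exact Set.mem_iInter₂.2 h
  · intro w hw
    have : qpt w ∈ (polarD P).extremePoints ℝ := by rw [hW]; exact ⟨w, hw, rfl⟩
    rw [hP] at this
    exact tight_of_ext V _ this

lemma edge_ext (P : Set (ℝ × ℝ)) (h0 : (0 : ℝ × ℝ) ∈ interior P) (E : Set (ℝ × ℝ))
    (hE : IsEdge P E) : ∃ u ∈ (polarD P).extremePoints ℝ, ∀ a ∈ E, dotR u a = 1 := by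
  obtain ⟨hexp, hrank⟩ := hE
  have hns : ¬ E.Subsingleton := by
    intro h
    rw [(vectorSpan_eq_bot_iff_subsingleton ℝ).2 h] at hrank
    simp at hrank
  rw [Set.not_subsingleton_iff] at hns
  obtain ⟨a, ha, b, hb, hne⟩ := hns
  obtain ⟨l, hl⟩ := hexp ⟨a, ha⟩
  have hmem : ∀ x, x ∈ E ↔ x ∈ P ∧ ∀ y ∈ P, l y ≤ l x := by
    intro x; rw [hl]; rfl
  have haE := (hmem a).1 ha
  have hP0 : (0 : ℝ × ℝ) ∈ P := interior_subset h0
  have hm : 0 ≤ l a := by simpa using haE.2 0 hP0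
  have hlne : l ≠ 0 := by
    rintro rfl
    have hEP : E = P := by
      ext x; rw [hmem]; simp
    have h1 : affineSpan ℝ P = ⊤ := by
      apply top_unique
      rw [← isOpen_interior.affineSpan_eq_top ⟨0, h0⟩]
      exact affineSpan_mono ℝ interior_subset
    rw [hEP, ← direction_affineSpan, h1, AffineSubspace.direction_top, finrank_top] at hrank
    simp at hrank
  have hmpos : 0 < l a := by
    rcases hm.lt_or_eq with h | h
    · exact h
    exfalso
    apply hlne
    obtain ⟨ε, hε, hb⟩ := exists_eps P h0
    have key : ∀ x : ℝ × ℝ, x ∈ P → -x ∈ P → l x = 0 := by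
      intro x h1 h2
      have e1 := haE.2 x h1
      have e2 := haE.2 (-x) h2
      rw [map_neg] at e2
      linarith
    have k1 := key (ε, 0) (hb _ (by simp [abs_of_pos hε]) (by simp [hε.le]))
      (hb _ (by simp [abs_of_pos hε]) (by simp [hε.le]))
    have k2 := key (0, ε) (hb _ (by simp [hε.le]) (by simp [abs_of_pos hε]))
      (hb _ (by simp [hε.le]) (by simp [abs_of_pos hε]))
    rw [clm_eq] at k1 k2
    simp [dotR, hε.ne'] at k1 k2
    ext
    · simpa using k1
    · simpa using k2
  have hdot : ∀ x, dotR (l (1, 0) / l a, l (0, 1) / l a) x = l x / l a := by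
    intro x
    rw [clm_eq l x]
    simp only [dotR]
    ring
  have hpol : ((l (1, 0) / l a, l (0, 1) / l a) : ℝ × ℝ) ∈ polarD P := by
    intro x hx
    rw [hdot, div_le_one hmpos]
    exact haE.2 x hx
  have hone : ∀ x ∈ E, dotR (l (1, 0) / l a, l (0, 1) / l a) x = 1 := by
    intro x hx
    rw [hdot, div_eq_one_iff_eq hmpos.ne']
    have := (hmem x).1 hx
    exact le_antisymm (haE.2 x this.1) (this.2 a haE.1)
  exact ⟨_, ext_of_tight P _ a b hpol haE.1 ((hmem b).1 hb).1 (hone a ha) (hone b hb) hne, hone⟩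

lemma edge_of_tight (P : Set (ℝ × ℝ)) (u v v' : ℝ × ℝ) (hu : u ∈ polarD P) (hv : v ∈ P)
    (hv' : v' ∈ P) (h1 : dotR u v = 1) (h2 : dotR u v' = 1) (hne : v ≠ v') :
    IsEdge P {x | x ∈ P ∧ dotR u x = 1} := by
  constructor
  · intro _
    refine ⟨dotL u, ?_⟩
    ext x
    constructor
    · rintro ⟨hx, hx1⟩
      refine ⟨hx, fun y hy => ?_⟩
      rw [dotL_apply, dotL_apply, hx1]
      exact hu y hy
    · rintro ⟨hx, hx1⟩
      refine ⟨hx, ?_⟩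
      have := hx1 v hv
      rw [dotL_apply, dotL_apply, h1] at this
      exact le_antisymm (hu x hx) this
  · have hr : v' - v ≠ 0 := sub_ne_zero.2 hne.symm
    have hmemr : v' - v ∈ vectorSpan ℝ {x | x ∈ P ∧ dotR u x = 1} :=
      vsub_mem_vectorSpan ℝ (show v' ∈ {x | x ∈ P ∧ dotR u x = 1} from ⟨hv', h2⟩)
        (show v ∈ {x | x ∈ P ∧ dotR u x = 1} from ⟨hv, h1⟩)
    have hker : ∀ z ∈ vectorSpan ℝ {x | x ∈ P ∧ dotR u x = 1}, dotR u z = 0 := by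
      intro z hz
      have hle : vectorSpan ℝ {x | x ∈ P ∧ dotR u x = 1} ≤ LinearMap.ker (dotL u).toLinearMap := by
        rw [vectorSpan, Submodule.span_le]
        rintro _ ⟨x, hx, y, hy, rfl⟩
        have e1 : dotR u x = 1 := hx.2
        have e2 : dotR u y = 1 := hy.2
        have hd : dotR u (x - y) = dotR u x - dotR u y := by
            simp only [dotR, Prod.fst_sub, Prod.snd_sub]; ring
        simp [dotL_apply, hd, e1, e2]
      have := hle hz
      rw [← dotL_apply]
      simpa using this
    rw [finrank_eq_one_iff']
    refine ⟨⟨v' - v, hmemr⟩, by simpa [Subtype.ext_iff] using hr, ?_⟩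
    rintro ⟨z, hz⟩
    have k1 := hker z hz
    have k2 := hker _ hmemr
    generalize v' - v = r at *
    have hrr : r.1 ^ 2 + r.2 ^ 2 ≠ 0 := by
      intro hc
      apply hr
      have e1 : r.1 = 0 := by nlinarith [sq_nonneg r.1, sq_nonneg r.2]
      have e2 : r.2 = 0 := by nlinarith [sq_nonneg r.1, sq_nonneg r.2]
      exact Prod.ext e1 e2
    have hdet : z.1 * r.2 - z.2 * r.1 = 0 := by
      by_contra hd
      have := dot_unique u 0 z r hd (by rw [k1]; simp [dotR]) (by rw [k2]; simp [dotR])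
      rw [this] at h1
      simp [dotR] at h1
    refine ⟨(z.1 * r.1 + z.2 * r.2) / (r.1 ^ 2 + r.2 ^ 2), ?_⟩
    apply Subtype.ext
    apply Prod.ext
    · simp only [SetLike.mk_smul_mk, Prod.smul_fst, smul_eq_mul]
      field_simp
      linear_combination -r.2 * hdet
    · simp only [SetLike.mk_smul_mk, Prod.smul_snd, smul_eq_mul]
      field_simp
      linear_combination r.1 * hdet

lemma zpt_injective : Function.Injective zpt := by
  intro a b h
  simp only [zpt, Prod.mk.injEq, Int.cast_inj] at h
  exact Prod.ext h.1 h.2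

lemma exists_den (W : Finset (ℚ × ℚ)) : ∃ D : ℤ, 0 < D ∧ ∀ w ∈ W, ∃ n : ℤ × ℤ,
    (n.1 : ℚ) = D * w.1 ∧ (n.2 : ℚ) = D * w.2 := by
  classical
  refine ⟨((∏ w ∈ W, (w.1.den * w.2.den) : ℕ) : ℤ), ?_, ?_⟩
  · have : 0 < ∏ w ∈ W, (w.1.den * w.2.den) :=
      Finset.prod_pos (fun w _ => Nat.mul_pos w.1.den_pos w.2.den_pos)
    exact_mod_cast this
  · intro w hw
    obtain ⟨k, hk⟩ := Finset.dvd_prod_of_mem (fun w : ℚ × ℚ => w.1.den * w.2.den) hw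
    rw [hk]
    refine ⟨(w.1.num * w.2.den * k, w.2.num * w.1.den * k), ?_, ?_⟩
    · push_cast; rw [← Rat.mul_den_eq_num w.1]; ring
    · push_cast; rw [← Rat.mul_den_eq_num w.2]; ring

theorem bridge (P : Set (ℝ × ℝ)) (V W : Finset (ℚ × ℚ)) (hPIP : IsPIP P)
    (hb : Bornology.IsBounded P)
    (hmem : ∀ x, x ∈ P ↔ ∀ w ∈ W, dotR (qpt w) x ≤ 1)
    (hintr : ∀ x, x ∈ interior P ↔ ∀ w ∈ W, dotR (qpt w) x < 1)
    (hVP : ∀ v ∈ V, qpt v ∈ P)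
    (hpos : ∀ x : ℝ × ℝ, (∀ w ∈ W, dotR (qpt w) x ≤ 0) → x = 0)
    (htight : ∀ w ∈ W, ∃ v ∈ V, ∃ v' ∈ V, dotR (qpt w) (qpt v) = 1 ∧ dotR (qpt w) (qpt v') = 1 ∧
        v.1 * v'.2 - v.2 * v'.1 ≠ 0)
    (hi : interior P ∩ latticePts = {(0, 0)}) :
    ∀ w ∈ W, ∃ u : ℤ × ℤ, IsCoprime u.1 u.2 ∧ zpt u = qpt w := by
  classical
  obtain ⟨D, hD, hden⟩ := exists_den W
  choose! nz hn1 hn2 using hden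
  have hDR : (0:ℝ) < D := by exact_mod_cast hD
  have hD1 : (1:ℝ) ≤ D := by exact_mod_cast hD
  have hDQ : (0:ℚ) < D := by exact_mod_cast hD
  have hdz : ∀ w ∈ W, ∀ x : ℤ × ℤ, (dz (nz w) x : ℝ) = D * dotR (qpt w) (zpt x) := by
    intro w hw x
    have e1 : ((nz w).1 : ℝ) = D * w.1 := by exact_mod_cast hn1 w hw
    have e2 : ((nz w).2 : ℝ) = D * w.2 := by exact_mod_cast hn2 w hw
    simp only [dz, dotR, qpt, zpt]; push_cast
    rw [e1, e2]; ring
  have hdq : ∀ w ∈ W, ∀ p : ℚ × ℚ, (((nz w).1 * p.1 + (nz w).2 * p.2 : ℚ) : ℝ) =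
      D * dotR (qpt w) (qpt p) := by
    intro w hw p
    rw [hn1 w hw, hn2 w hw]
    simp only [dotR, qpt]; push_cast; ring
  have hscale : ∀ t : ℝ, 0 < t → ∀ x : ℝ × ℝ, x ∈ t • P ↔ ∀ w ∈ W, dotR (qpt w) x ≤ t := by
    intro t ht x
    rw [Set.mem_smul_set_iff_inv_smul_mem₀ ht.ne', hmem]
    have : ∀ w, dotR (qpt w) (t⁻¹ • x) ≤ 1 ↔ dotR (qpt w) x ≤ t := by
      intro w
      have : dotR (qpt w) (t⁻¹ • x) = dotR (qpt w) x / t := by simp [dotR]; field_simp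
      rw [this, div_le_one ht]
    simp only [this]
  obtain ⟨c, hc⟩ := hPIP
  obtain ⟨R, hR⟩ := hb.exists_norm_le
  have hfin : ∀ T : ℤ, ({x | ∀ n ∈ W.image nz, dz n x ≤ T} : Set (ℤ × ℤ)).Finite := by
    intro T
    have hS : (0:ℝ) < |(T:ℝ)| + 1 := by positivity
    have hbd : ∀ x : ℤ × ℤ, (∀ n ∈ W.image nz, dz n x ≤ T) →
        |(x.1 : ℝ)| ≤ R * (|(T:ℝ)| + 1) ∧ |(x.2 : ℝ)| ≤ R * (|(T:ℝ)| + 1) := by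
      intro x hx
      have h1 : zpt x ∈ (|(T:ℝ)| + 1) • P := by
        rw [hscale _ hS]
        intro w hw
        have h2 := hx (nz w) (Finset.mem_image_of_mem _ hw)
        have h3 : (dz (nz w) x : ℝ) ≤ T := by exact_mod_cast h2
        rw [hdz w hw] at h3
        have h4 := le_abs_self (T : ℝ)
        by_contra hcon
        push Not at hcon
        nlinarith
      obtain ⟨y, hy, hyx⟩ := h1
      have h5 := hR y hy
      rw [Prod.norm_def, max_le_iff, Real.norm_eq_abs, Real.norm_eq_abs] at h5
      have e1 : (x.1 : ℝ) = (|(T:ℝ)| + 1) * y.1 := (congrArg Prod.fst hyx).symm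
      have e2 : (x.2 : ℝ) = (|(T:ℝ)| + 1) * y.2 := (congrArg Prod.snd hyx).symm
      rw [e1, e2, abs_mul, abs_mul, abs_of_pos hS]
      constructor
      · rw [mul_comm]; exact mul_le_mul_of_nonneg_right h5.1 hS.le
      · rw [mul_comm]; exact mul_le_mul_of_nonneg_right h5.2 hS.le
    obtain ⟨B, hB⟩ := exists_int_gt (R * (|(T:ℝ)| + 1))
    apply Set.Finite.subset ((Set.finite_Icc (-B) B).prod (Set.finite_Icc (-B) B))
    intro x hx
    obtain ⟨h1, h2⟩ := hbd x hx
    have h1' := abs_le.1 (h1.trans hB.le)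
    have h2' := abs_le.1 (h2.trans hB.le)
    refine ⟨⟨?_, ?_⟩, ⟨?_, ?_⟩⟩
    · exact_mod_cast h1'.1
    · exact_mod_cast h1'.2
    · exact_mod_cast h2'.1
    · exact_mod_cast h2'.2
  have hcore := core (W.image nz) D hD (by
      intro x hx
      by_contra hcon
      push Not at hcon
      apply hx
      apply zpt_injective
      have : zpt x = 0 := hpos (zpt x) (by
        intro w hw
        have h2 := hcon (nz w) (Finset.mem_image_of_mem _ hw)
        have h3 : (dz (nz w) x : ℝ) ≤ 0 := by exact_mod_cast h2
        rw [hdz w hw] at h3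
        by_contra hcc
        push Not at hcc
        nlinarith)
      rw [this]; exact Prod.ext (by simp [zpt]) (by simp [zpt]))
    (by
      intro n hn
      obtain ⟨w, hw, rfl⟩ := Finset.mem_image.1 hn
      obtain ⟨v, hv, v', hv', h1, h2, hdet⟩ := htight w hw
      refine ⟨v, v', ?_, ?_, ?_, ?_⟩
      · rintro rfl; apply hdet; ring
      · have := hdq w hw v
        rw [h1, mul_one] at this
        exact_mod_cast this
      · have := hdq w hw v'
        rw [h2, mul_one] at this
        exact_mod_cast this
      · intro n' hn'
        obtain ⟨w', hw', rfl⟩ := Finset.mem_image.1 hn'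
        have aux : ∀ z ∈ V, ((nz w').1 * z.1 + (nz w').2 * z.2 : ℚ) ≤ D := by
          intro z hz
          have k1 := hdq w' hw' z
          have k2 := (hmem _).1 (hVP z hz) w' hw'
          have k3 : (((nz w').1 * z.1 + (nz w').2 * z.2 : ℚ) : ℝ) ≤ D := by
            rw [k1]; nlinarith
          exact_mod_cast k3
        exact ⟨aux v hv, aux v' hv'⟩)
    hfin c (by
      intro t ht
      rw [← hc t ht]
      have htR : (0:ℝ) < t := by exact_mod_cast ht
      have : ((t : ℝ) • P) ∩ latticePts = zpt '' {x | ∀ n ∈ W.image nz, dz n x ≤ D * t} := by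
        have key : ∀ x : ℤ × ℤ, zpt x ∈ (t : ℝ) • P ↔ ∀ n ∈ W.image nz, dz n x ≤ D * t := by
          intro x
          rw [hscale _ htR, Finset.forall_mem_image]
          apply forall₂_congr
          intro w hw
          rw [← mul_le_mul_iff_right₀ hDR, ← hdz w hw]
          constructor
          · intro h; exact_mod_cast h
          · intro h; exact_mod_cast h
        ext y
        constructor
        · rintro ⟨hy, m, n, rfl⟩
          exact ⟨(m, n), (key (m, n)).1 hy, rfl⟩
        · rintro ⟨x, hx, rfl⟩
          exact ⟨(key x).2 hx, x.1, x.2, rfl⟩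
      rw [ehr, this, Set.ncard_image_of_injective _ zpt_injective, LL]
      push_cast; rfl)
    (by
      intro x hx
      have h1 : zpt x ∈ interior P := by
        rw [hintr]
        intro w hw
        have h2 := hx (nz w) (Finset.mem_image_of_mem _ hw)
        have h3 : (dz (nz w) x : ℝ) < D := by exact_mod_cast h2
        rw [hdz w hw] at h3
        by_contra hcc
        push Not at hcc
        nlinarith
      have h2 : zpt x ∈ interior P ∩ latticePts := ⟨h1, x.1, x.2, rfl⟩
      rw [hi] at h2
      apply zpt_injective
      rw [Set.mem_singleton_iff.1 h2]
      simp [zpt])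
  intro w hw
  obtain ⟨u, hu, hnu⟩ := hcore (nz w) (Finset.mem_image_of_mem _ hw)
  refine ⟨u, hu, ?_⟩
  have e1 := hn1 w hw
  have e2 := hn2 w hw
  rw [hnu] at e1 e2
  push_cast at e1 e2
  have f1 := mul_left_cancel₀ hDQ.ne' e1
  have f2 := mul_left_cancel₀ hDQ.ne' e2
  apply Prod.ext
  · simp only [zpt, qpt]; rw [← f1]; simp
  · simp only [zpt, qpt]; rw [← f2]; simp


/-- for a rational pseudointegral convex polygon `P` with `0` in
its interior, the following are equivalent: (i) the only interior lattice point
is the origin; (ii) every edge lies on a line `⟨u,·⟩ = 1` for a primitive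
integral vector `u` with `⟨u,·⟩ ≤ 1` on `P`; (iii) the dual polygon
`P° = {u : ⟨u,a⟩ ≤ 1 ∀ a ∈ P}` is the convex hull of finitely many lattice
points. -/
theorem stmt_14 (P : Set (ℝ × ℝ)) (hP : IsRatPolygon P) (hPIP : IsPIP P)
    (h0 : (0 : ℝ × ℝ) ∈ interior P) :
    List.TFAE
      [interior P ∩ latticePts = {(0, 0)},
       ∀ E : Set (ℝ × ℝ), IsEdge P E →
         ∃ u : ℤ × ℤ, IsCoprime u.1 u.2 ∧ (∀ a ∈ E, dotR (zpt u) a = 1) ∧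
           ∀ p ∈ P, dotR (zpt u) p ≤ 1,
       ∃ V : Finset (ℤ × ℤ),
         {u : ℝ × ℝ | ∀ a ∈ P, dotR u a ≤ 1} =
           convexHull ℝ (zpt '' (V : Set (ℤ × ℤ)))] := by
  obtain ⟨V, hPV, -⟩ := hP
  obtain ⟨W, hpol, hext, hmem, hintr, htight⟩ := geom P V hPV h0
  have hb : Bornology.IsBounded P := by
    rw [hPV]
    exact (Set.Finite.isCompact_convexHull (𝕜 := ℝ) (V.finite_toSet.image qpt)).isBounded
  have hVP : ∀ v ∈ V, qpt v ∈ P := by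
    intro v hv; rw [hPV]; exact subset_convexHull ℝ _ ⟨v, hv, rfl⟩
  have hpos : ∀ x : ℝ × ℝ, (∀ w ∈ W, dotR (qpt w) x ≤ 0) → x = 0 := by
    intro x hx
    by_contra hne
    obtain ⟨R, hR⟩ := hb.exists_norm_le
    have hxn : 0 < ‖x‖ := norm_pos_iff.2 hne
    have h1 : ((|R| + 1) / ‖x‖) • x ∈ P := by
      rw [hmem]
      intro w hw
      have : dotR (qpt w) (((|R| + 1) / ‖x‖) • x) = ((|R| + 1) / ‖x‖) * dotR (qpt w) x := by
        simp [dotR]; ring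
      rw [this]
      have h2 : 0 ≤ (|R| + 1) / ‖x‖ := by positivity
      have := mul_nonpos_of_nonneg_of_nonpos h2 (hx w hw)
      linarith
    have h3 := hR _ h1
    rw [norm_smul, Real.norm_of_nonneg (by positivity), div_mul_cancel₀ _ hxn.ne'] at h3
    have := le_abs_self R
    linarith
  tfae_have 1 → 2 := by
    intro hi E hE
    obtain ⟨u, hu, hE1⟩ := edge_ext P h0 E hE
    have hu' := hu
    rw [hext] at hu'
    obtain ⟨w, hw, rfl⟩ := hu'
    obtain ⟨z, hz, hzw⟩ := bridge P V W hPIP hb hmem hintr hVP hpos htight hi w hw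
    refine ⟨z, hz, ?_, ?_⟩
    · rw [hzw]; exact hE1
    · rw [hzw]; exact hu.1
  tfae_have 2 → 3 := by
    classical
    intro h
    have hz : ∀ w ∈ W, ∃ u : ℤ × ℤ, zpt u = qpt w := by
      intro w hw
      obtain ⟨v, hv, v', hv', h1, h2, hdet⟩ := htight w hw
      have hwe : qpt w ∈ (polarD P).extremePoints ℝ := by rw [hext]; exact ⟨w, hw, rfl⟩
      have hdet' : (qpt v).1 * (qpt v').2 - (qpt v).2 * (qpt v').1 ≠ 0 := by
        simp only [qpt]; exact_mod_cast hdet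
      have hne : qpt v ≠ qpt v' := by
        intro he; rw [he] at hdet'; apply hdet'; ring
      obtain ⟨u, -, hu1, -⟩ := h _ (edge_of_tight P (qpt w) (qpt v) (qpt v') hwe.1 (hVP v hv)
        (hVP v' hv') h1 h2 hne)
      exact ⟨u, dot_unique _ _ _ _ hdet' ((hu1 _ ⟨hVP v hv, h1⟩).trans h1.symm)
        ((hu1 _ ⟨hVP v' hv', h2⟩).trans h2.symm)⟩
    choose! z hz using hz
    refine ⟨W.image z, ?_⟩
    change polarD P = _
    rw [hpol, Finset.coe_image, Set.image_image]
    congr 1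
    exact Set.image_congr (fun w hw => (hz w hw).symm)
  tfae_have 3 → 1 := by
    rintro ⟨Z, hZ⟩
    change polarD P = _ at hZ
    have hsub : (polarD P).extremePoints ℝ ⊆ zpt '' (Z : Set (ℤ × ℤ)) := by
      rw [hZ]; exact extremePoints_convexHull_subset
    ext x
    constructor
    · rintro ⟨hx, m, n, rfl⟩
      rw [hintr] at hx
      apply hpos
      intro w hw
      have h1 := hx w hw
      have hwe : qpt w ∈ (polarD P).extremePoints ℝ := by rw [hext]; exact ⟨w, hw, rfl⟩
      obtain ⟨z, -, hzw⟩ := hsub hwe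
      rw [← hzw] at h1 ⊢
      simp only [dotR, zpt] at h1 ⊢
      have h2 : z.1 * m + z.2 * n < 1 := by exact_mod_cast h1
      have h3 : z.1 * m + z.2 * n ≤ 0 := by omega
      exact_mod_cast h3
    · intro hx
      rw [Set.mem_singleton_iff.1 hx]
      exact ⟨h0, 0, 0, by simp⟩
  tfae_finish
end

section
/- Let u, v, w ∈ ℤ² be primitive vectors such that x := det(v,w), y := det(w,u), and z := det(u,v) are all positive, let α, β, γ ∈ ℚ, and suppose the set T := {a ∈ ℝ² : ⟨u,a⟩ ≤ α, ⟨v,a⟩ ≤ β, ⟨w,a⟩ ≤ γ} has nonempty interior (so T is a rational triangle). If T is pseudointegral, then the number of lattice points on the boundary of T equals (αx + βy + γz)(x + y + z)/(xyz). -/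
open Set Pointwise

/-- Lattice points satisfying three integral inequalities. -/
def latSet (u v w : ℤ × ℤ) (i j k : ℤ) : Set (ℤ × ℤ) :=
  {p | u.1 * p.1 + u.2 * p.2 ≤ i ∧ v.1 * p.1 + v.2 * p.2 ≤ j ∧ w.1 * p.1 + w.2 * p.2 ≤ k}

/-- The number of lattice points satisfying three integral inequalities. -/
noncomputable def cnt (u v w : ℤ × ℤ) (i j k : ℤ) : ℤ := ((latSet u v w i j k).ncard : ℤ)

/-- The standing hypotheses on the normals. -/
structure Tri (u v w : ℤ × ℤ) (x y z : ℤ) : Prop where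
  hu : IsCoprime u.1 u.2
  hv : IsCoprime v.1 v.2
  hw : IsCoprime w.1 w.2
  hxd : x = v.1 * w.2 - v.2 * w.1
  hyd : y = w.1 * u.2 - w.2 * u.1
  hzd : z = u.1 * v.2 - u.2 * v.1
  hx : 0 < x
  hy : 0 < y
  hz : 0 < z

lemma Tri.cyc {u v w : ℤ × ℤ} {x y z : ℤ} (h : Tri u v w x y z) : Tri v w u y z x :=
  ⟨h.hv, h.hw, h.hu, h.hyd, h.hzd, h.hxd, h.hy, h.hz, h.hx⟩

lemma cnt_cyc (u v w : ℤ × ℤ) (i j k : ℤ) : cnt v w u j k i = cnt u v w i j k := by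
  unfold cnt latSet
  congr 2
  ext p
  simp only [Set.mem_ofPred_eq]
  tauto

lemma Tri.rel {u v w : ℤ × ℤ} {x y z : ℤ} (h : Tri u v w x y z) (p q : ℤ) :
    x * (u.1 * p + u.2 * q) + y * (v.1 * p + v.2 * q) + z * (w.1 * p + w.2 * q) = 0 := by
  rw [h.hxd, h.hyd, h.hzd]; ring

lemma latSet_finite {u v w : ℤ × ℤ} {x y z : ℤ} (h : Tri u v w x y z) (i j k : ℤ) :
    (latSet u v w i j k).Finite := by
  have hx := h.hx
  have hy := h.hy
  have hz := h.hz
  let φ : ℤ × ℤ → ℤ × ℤ := fun p => (u.1 * p.1 + u.2 * p.2, v.1 * p.1 + v.2 * p.2)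
  have hinj : Function.Injective φ := by
    rintro ⟨p, q⟩ ⟨p', q'⟩ hpq
    simp only [φ, Prod.mk.injEq] at hpq
    obtain ⟨h1, h2⟩ := hpq
    have e1 : z * p = z * p' := by rw [h.hzd]; linear_combination v.2 * h1 - u.2 * h2
    have e2 : z * q = z * q' := by rw [h.hzd]; linear_combination u.1 * h2 - v.1 * h1
    rw [mul_right_inj' hz.ne'] at e1 e2
    rw [e1, e2]
  refine Set.Finite.of_finite_image
    (((Set.finite_Icc (-(|y * j| + |z * k|)) i).prod
      (Set.finite_Icc (-(|x * i| + |z * k|)) j)).subset ?_) (hinj.injOn (s := latSet u v w i j k))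
  rintro _ ⟨⟨p, q⟩, ⟨h1, h2, h3⟩, rfl⟩
  have hr := h.rel p q
  simp only [φ, Set.mem_prod, Set.mem_Icc] at *
  set U := u.1 * p + u.2 * q
  set V := v.1 * p + v.2 * q
  set W := w.1 * p + w.2 * q
  have a1 : x * U ≤ x * i := mul_le_mul_of_nonneg_left h1 hx.le
  have a2 : y * V ≤ y * j := mul_le_mul_of_nonneg_left h2 hy.le
  have a3 : z * W ≤ z * k := mul_le_mul_of_nonneg_left h3 hz.le
  have b1 := le_abs_self (x * i)
  have b2 := le_abs_self (y * j)
  have b3 := le_abs_self (z * k)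
  have c1 := abs_nonneg (x * i)
  have c2 := abs_nonneg (y * j)
  have c3 := abs_nonneg (z * k)
  refine ⟨⟨?_, h1⟩, ⟨?_, h2⟩⟩
  · by_contra hc
    push Not at hc
    nlinarith
  · by_contra hc
    push Not at hc
    nlinarith

lemma floor_neg_aux (m z : ℤ) (hz : 0 < z) : (-m - 1) / z = -(m / z) - 1 := by
  rw [Int.ediv_eq_iff_of_pos hz]
  have h1 := Int.mul_ediv_add_emod m z
  have h2 := Int.emod_nonneg m hz.ne'
  have h3 := Int.emod_lt_of_pos m hz
  constructor <;> nlinarith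

lemma exists_g {u v w : ℤ × ℤ} {x y z : ℤ} (h : Tri u v w x y z) :
    ∃ g : ℤ → ℤ → ℤ → ℤ,
      (∀ i j k, -(y + z) < x * i + y * j + z * k →
        cnt u v w i j k - cnt u v w (i - 1) j k = g i j k) ∧
      (∀ i j k m a b c, g (x * y * z * m * a + i) (x * y * z * m * b + j) (x * y * z * m * c + k)
        = g i j k + m * x * (x * a + y * b + z * c)) ∧
      (∀ i j k, g (-i) (-j - 1) (-k - 1) = - g i j k) ∧
      g 0 0 0 = 1 ∧ g 0 0 (-1) = 0 := by
  have hx := h.hx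
  have hy := h.hy
  have hz := h.hz
  obtain ⟨e1, e2, he⟩ := h.hu
  set B := v.1 * e1 + v.2 * e2 with hB
  set C := w.1 * e1 + w.2 * e2 with hC
  have hBC : x + y * B + z * C = 0 := by
    have := h.rel e1 e2
    linear_combination this - x * he
  refine ⟨fun i j k => (j - i * B) / z + (k - i * C) / y + 1, ?_, ?_, ?_, ?_, ?_⟩
  · intro i j k hS
    have hline : latSet u v w i j k = latSet u v w (i - 1) j k ∪
        (fun s : ℤ => ((i * e1 - s * u.2, i * e2 + s * u.1) : ℤ × ℤ)) ''
          (Set.Icc (-((k - i * C) / y)) ((j - i * B) / z)) := by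
      ext ⟨p, q⟩
      simp only [latSet, Set.mem_union, Set.mem_ofPred_eq, Set.mem_image, Set.mem_Icc,
        Prod.mk.injEq]
      constructor
      · rintro ⟨h1, h2, h3⟩
        rcases lt_or_eq_of_le h1 with h1 | h1
        · left; exact ⟨by omega, h2, h3⟩
        · right
          refine ⟨e1 * q - e2 * p, ⟨?_, ?_⟩, ?_, ?_⟩
          · rw [neg_le, Int.le_ediv_iff_mul_le hy]
            have : -(e1 * q - e2 * p) * y = w.1 * p + w.2 * q - i * C := by
              rw [h.hyd, hC, ← h1]
              linear_combination (w.1 * p + w.2 * q) * he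
            linarith
          · rw [Int.le_ediv_iff_mul_le hz]
            have : (e1 * q - e2 * p) * z = v.1 * p + v.2 * q - i * B := by
              rw [h.hzd, hB, ← h1]
              linear_combination (v.1 * p + v.2 * q) * he
            linarith
          · rw [← h1]; linear_combination p * he
          · rw [← h1]; linear_combination q * he
      · rintro (⟨h1, h2, h3⟩ | ⟨s, ⟨h1, h2⟩, rfl, rfl⟩)
        · exact ⟨by omega, h2, h3⟩
        · rw [neg_le, Int.le_ediv_iff_mul_le hy] at h1
          rw [Int.le_ediv_iff_mul_le hz] at h2
          refine ⟨?_, ?_, ?_⟩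
          · apply le_of_eq; linear_combination i * he
          · have : v.1 * (i * e1 - s * u.2) + v.2 * (i * e2 + s * u.1) = i * B + s * z := by
              rw [h.hzd, hB]; ring
            linarith
          · have : w.1 * (i * e1 - s * u.2) + w.2 * (i * e2 + s * u.1) = i * C - s * y := by
              rw [h.hyd, hC]; ring
            linarith
    have hdisj : Disjoint (latSet u v w (i - 1) j k)
        ((fun s : ℤ => ((i * e1 - s * u.2, i * e2 + s * u.1) : ℤ × ℤ)) ''
          (Set.Icc (-((k - i * C) / y)) ((j - i * B) / z))) := by
      rw [Set.disjoint_left]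
      rintro _ ⟨h1, -, -⟩ ⟨s, -, rfl⟩
      have : u.1 * (i * e1 - s * u.2) + u.2 * (i * e2 + s * u.1) = i := by
        linear_combination i * he
      simp only at h1
      omega
    have hinj : Function.Injective
        (fun s : ℤ => ((i * e1 - s * u.2, i * e2 + s * u.1) : ℤ × ℤ)) := by
      intro s s' hs
      simp only [Prod.mk.injEq] at hs
      linear_combination e1 * hs.2 - e2 * hs.1 - (s - s') * he
    unfold cnt
    rw [hline, Set.ncard_union_eq hdisj (latSet_finite h _ _ _)
      ((Set.finite_Icc _ _).image _), Set.ncard_image_of_injective _ hinj,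
      ← Finset.coe_Icc, Set.ncard_coe_finset, Int.card_Icc]
    have hn : 0 ≤ (j - i * B) / z + (k - i * C) / y + 1 := by
      have h1 := Int.mul_ediv_add_emod (j - i * B) z
      have h3 := Int.emod_lt_of_pos (j - i * B) hz
      have h1' := Int.mul_ediv_add_emod (k - i * C) y
      have h3' := Int.emod_lt_of_pos (k - i * C) hy
      set q1 := (j - i * B) / z
      set q2 := (k - i * C) / y
      by_contra hc
      have hc' : q1 + q2 ≤ -2 := by omega
      have k1 : z * q1 ≥ j - i * B - z + 1 := by omega
      have k2 : y * q2 ≥ k - i * C - y + 1 := by omega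
      have k3 := mul_le_mul_of_nonneg_left k1 hy.le
      have k4 := mul_le_mul_of_nonneg_left k2 hz.le
      have k5 : y * z * (q1 + q2) ≤ y * z * (-2) :=
        mul_le_mul_of_nonneg_left hc' (mul_pos hy hz).le
      have k6 : y * (i * B) + z * (i * C) = - x * i := by linear_combination i * hBC
      nlinarith
    push_cast
    rw [Int.toNat_of_nonneg (by linarith)]
    ring
  · intro i j k m a b c
    have e1 : x * y * z * m * b + j - (x * y * z * m * a + i) * B
      = (j - i * B) + z * (x * y * m * (b - a * B)) := by ring
    have e2 : x * y * z * m * c + k - (x * y * z * m * a + i) * C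
      = (k - i * C) + y * (x * z * m * (c - a * C)) := by ring
    simp only
    rw [e1, e2, Int.add_mul_ediv_left _ _ hz.ne', Int.add_mul_ediv_left _ _ hy.ne']
    linear_combination (-m * a * x) * hBC
  · intro i j k
    have e1 : -j - 1 - -i * B = -(j - i * B) - 1 := by ring
    have e2 : -k - 1 - -i * C = -(k - i * C) - 1 := by ring
    simp only
    rw [e1, e2, floor_neg_aux _ _ hz, floor_neg_aux _ _ hy]
    ring
  · simp
  · have := floor_neg_aux 0 y hy
    simp at this
    simp [this]

lemma mono_aux (x y z : ℤ) (hx : 0 < x) (hy : 0 < y) (hz : 0 < z) (lo hi : ℤ)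
    (F : ℤ → ℤ → ℤ → ℤ)
    (h1 : ∀ i j k, lo < x * (i - 1) + y * j + z * k → x * i + y * j + z * k < hi →
      F i j k = F (i - 1) j k)
    (h2 : ∀ i j k, lo < x * i + y * (j - 1) + z * k → x * i + y * j + z * k < hi →
      F i j k = F i (j - 1) k)
    (h3 : ∀ i j k, lo < x * i + y * j + z * (k - 1) → x * i + y * j + z * k < hi →
      F i j k = F i j (k - 1))
    (i j k : ℤ) (hlo : lo < x * i + y * j + z * k) (a b c : ℕ)
    (hhi : x * (i + a) + y * (j + b) + z * (k + c) < hi) :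
    F (i + a) (j + b) (k + c) = F i j k := by
  have p1 : ∀ a : ℕ, x * (i + a) + y * j + z * k < hi → F (i + a) j k = F i j k := by
    intro a
    induction a with
    | zero => intro _; simp
    | succ n ih =>
      intro hh
      push_cast at hh ⊢
      have hxn : 0 ≤ x * (n : ℤ) := by positivity
      rw [h1 (i + (n + 1)) j k (by nlinarith) hh, ← ih (by nlinarith)]
      congr 1; ring
  have p2 : ∀ b : ℕ, x * (i + a) + y * (j + b) + z * k < hi →
      F (i + a) (j + b) k = F (i + a) j k := by
    intro b
    induction b with
    | zero => intro _; simp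
    | succ n ih =>
      intro hh
      push_cast at hh ⊢
      have hxn : 0 ≤ x * (a : ℤ) := by positivity
      have hyn : 0 ≤ y * (n : ℤ) := by positivity
      rw [h2 (i + a) (j + (n + 1)) k (by nlinarith) hh, ← ih (by nlinarith)]
      congr 1; ring
  have p3 : ∀ c : ℕ, x * (i + a) + y * (j + b) + z * (k + c) < hi →
      F (i + a) (j + b) (k + c) = F (i + a) (j + b) k := by
    intro c
    induction c with
    | zero => intro _; simp
    | succ n ih =>
      intro hh
      push_cast at hh ⊢
      have hxn : 0 ≤ x * (a : ℤ) := by positivity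
      have hyn : 0 ≤ y * (b : ℤ) := by positivity
      have hzn : 0 ≤ z * (n : ℤ) := by positivity
      rw [h3 (i + a) (j + b) (k + (n + 1)) (by nlinarith) hh, ← ih (by nlinarith)]
      congr 1; ring
  have hyb : 0 ≤ y * (b : ℤ) := by positivity
  have hzc : 0 ≤ z * (c : ℤ) := by positivity
  rw [p3 c hhi, p2 b (by nlinarith), p1 a (by nlinarith)]

lemma const_aux (x y z : ℤ) (hx : 0 < x) (hy : 0 < y) (hz : 0 < z) (lo hi : ℤ) (hlo0 : lo < 0)
    (F : ℤ → ℤ → ℤ → ℤ)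
    (h1 : ∀ i j k, lo < x * (i - 1) + y * j + z * k → x * i + y * j + z * k < hi →
      F i j k = F (i - 1) j k)
    (h2 : ∀ i j k, lo < x * i + y * (j - 1) + z * k → x * i + y * j + z * k < hi →
      F i j k = F i (j - 1) k)
    (h3 : ∀ i j k, lo < x * i + y * j + z * (k - 1) → x * i + y * j + z * k < hi →
      F i j k = F i j (k - 1))
    (i j k : ℤ) (hlo : lo < x * i + y * j + z * k)
    (hhi : x * max i 0 + y * max j 0 + z * max k 0 < hi) :
    F i j k = F 0 0 0 := by
  have m1 := mono_aux x y z hx hy hz lo hi F h1 h2 h3 i j k hlo (max i 0 - i).toNat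
    (max j 0 - j).toNat (max k 0 - k).toNat
  have m2 := mono_aux x y z hx hy hz lo hi F h1 h2 h3 0 0 0 (by simpa using hlo0) (max i 0).toNat
    (max j 0).toNat (max k 0).toNat
  rw [Int.toNat_of_nonneg (by simp), Int.toNat_of_nonneg (by simp),
    Int.toNat_of_nonneg (by simp)] at m1 m2
  simp only [add_sub_cancel, zero_add] at m1 m2
  rw [← m1 hhi, ← m2 hhi]

lemma cnt_zero {u v w : ℤ × ℤ} {x y z : ℤ} (h : Tri u v w x y z) : cnt u v w 0 0 0 = 1 := by
  have hx := h.hx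
  have hy := h.hy
  have hz := h.hz
  have : latSet u v w 0 0 0 = {(0, 0)} := by
    ext ⟨p, q⟩
    simp only [latSet, Set.mem_ofPred_eq, Set.mem_singleton_iff, Prod.mk.injEq]
    constructor
    · rintro ⟨h1, h2, h3⟩
      have hr := h.rel p q
      have a1 := mul_nonpos_of_nonneg_of_nonpos hx.le h1
      have a2 := mul_nonpos_of_nonneg_of_nonpos hy.le h2
      have a3 := mul_nonpos_of_nonneg_of_nonpos hz.le h3
      have b1 : x * (u.1 * p + u.2 * q) = 0 := by linarith
      have b2 : y * (v.1 * p + v.2 * q) = 0 := by linarith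
      have c1 := (mul_eq_zero.1 b1).resolve_left hx.ne'
      have c2 := (mul_eq_zero.1 b2).resolve_left hy.ne'
      have e1 : z * p = 0 := by rw [h.hzd]; linear_combination v.2 * c1 - u.2 * c2
      have e2 : z * q = 0 := by rw [h.hzd]; linear_combination u.1 * c2 - v.1 * c1
      exact ⟨(mul_eq_zero.1 e1).resolve_left hz.ne', (mul_eq_zero.1 e2).resolve_left hz.ne'⟩
    · rintro ⟨rfl, rfl⟩; simp
  simp [cnt, this]

lemma exists_g2 {u v w : ℤ × ℤ} {x y z : ℤ} (h : Tri u v w x y z) :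
    ∃ g : ℤ → ℤ → ℤ → ℤ,
      (∀ i j k, -(z + x) < x * i + y * j + z * k →
        cnt u v w i j k - cnt u v w i (j - 1) k = g i j k) ∧
      (∀ i j k m a b c, g (x * y * z * m * a + i) (x * y * z * m * b + j) (x * y * z * m * c + k)
        = g i j k + m * y * (x * a + y * b + z * c)) ∧
      (∀ i j k, g (-i - 1) (-j) (-k - 1) = - g i j k) ∧
      g 0 0 0 = 1 ∧ g (-1) 0 0 = 0 := by
  obtain ⟨g, h1, h2, h3, h4, h5⟩ := exists_g h.cyc
  refine ⟨fun i j k => g j k i, ?_, ?_, ?_, h4, h5⟩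
  · intro i j k hS
    rw [← cnt_cyc, ← cnt_cyc u v w i (j - 1) k]
    exact h1 j k i (by linarith)
  · intro i j k m a b c
    have := h2 j k i m b c a
    rw [show y * z * x = x * y * z by ring] at this
    simp only
    rw [this]; ring
  · intro i j k
    exact h3 j k i

lemma exists_g3 {u v w : ℤ × ℤ} {x y z : ℤ} (h : Tri u v w x y z) :
    ∃ g : ℤ → ℤ → ℤ → ℤ,
      (∀ i j k, -(x + y) < x * i + y * j + z * k →
        cnt u v w i j k - cnt u v w i j (k - 1) = g i j k) ∧
      (∀ i j k m a b c, g (x * y * z * m * a + i) (x * y * z * m * b + j) (x * y * z * m * c + k)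
        = g i j k + m * z * (x * a + y * b + z * c)) ∧
      (∀ i j k, g (-i - 1) (-j - 1) (-k) = - g i j k) ∧
      g 0 0 0 = 1 := by
  obtain ⟨g, h1, h2, h3, h4, h5⟩ := exists_g2 h.cyc
  refine ⟨fun i j k => g j k i, ?_, ?_, ?_, h4⟩
  · intro i j k hS
    rw [← cnt_cyc, ← cnt_cyc u v w i j (k - 1)]
    exact h1 j k i (by linarith)
  · intro i j k m a b c
    have := h2 j k i m b c a
    rw [show y * z * x = x * y * z by ring] at this
    simp only
    rw [this]; ring
  · intro i j k
    exact h3 j k i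

lemma R1 {u v w : ℤ × ℤ} {x y z : ℤ} (h : Tri u v w x y z) (m a b c i j k : ℤ)
    (hm : 0 ≤ m) (hs : 0 ≤ x * a + y * b + z * c)
    (hS : -(x + y + z) < x * i + y * j + z * k) :
    cnt u v w (x * y * z * m * a + i) (x * y * z * m * b + j) (x * y * z * m * c + k) =
      cnt u v w (x * y * z * m * a) (x * y * z * m * b) (x * y * z * m * c) + cnt u v w i j k - 1
      + m * (x * a + y * b + z * c) * (x * i + y * j + z * k) := by
  have hx := h.hx
  have hy := h.hy
  have hz := h.hz
  have hM : 0 ≤ x * y * z * m * (x * a + y * b + z * c) := by positivity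
  obtain ⟨gu, du, su, -, -⟩ := exists_g h
  obtain ⟨gv, dv, sv, -, -⟩ := exists_g2 h
  obtain ⟨gw, dw, sw, -, -⟩ := exists_g3 h
  have := const_aux x y z hx hy hz (-(x + y + z))
    (x * max i 0 + y * max j 0 + z * max k 0 + 1) (by linarith)
    (fun i j k => cnt u v w (x * y * z * m * a + i) (x * y * z * m * b + j) (x * y * z * m * c + k)
      - cnt u v w i j k - m * (x * a + y * b + z * c) * (x * i + y * j + z * k))
    ?_ ?_ ?_ i j k hS (by linarith)
  · simp only [cnt_zero h, add_zero, mul_zero] at this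
    linarith
  · intro i j k hl _
    have e1 := du i j k (by linarith)
    have e2 := du (x * y * z * m * a + i) (x * y * z * m * b + j) (x * y * z * m * c + k)
      (by linarith)
    rw [su] at e2
    rw [show x * y * z * m * a + i - 1 = x * y * z * m * a + (i - 1) by ring] at e2
    linarith
  · intro i j k hl _
    have e1 := dv i j k (by linarith)
    have e2 := dv (x * y * z * m * a + i) (x * y * z * m * b + j) (x * y * z * m * c + k)
      (by linarith)
    rw [sv] at e2
    rw [show x * y * z * m * b + j - 1 = x * y * z * m * b + (j - 1) by ring] at e2
    linarith
  · intro i j k hl _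
    have e1 := dw i j k (by linarith)
    have e2 := dw (x * y * z * m * a + i) (x * y * z * m * b + j) (x * y * z * m * c + k)
      (by linarith)
    rw [sw] at e2
    rw [show x * y * z * m * c + k - 1 = x * y * z * m * c + (k - 1) by ring] at e2
    linarith

lemma R2 {u v w : ℤ × ℤ} {x y z : ℤ} (h : Tri u v w x y z) (m a b c i j k : ℤ)
    (hS : -(x + y + z) < x * i + y * j + z * k)
    (hi : x * max i 0 + y * max j 0 + z * max k 0 < x * y * z * m * (x * a + y * b + z * c)) :
    cnt u v w (x * y * z * m * a + (-1 - i)) (x * y * z * m * b + (-1 - j))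
        (x * y * z * m * c + (-1 - k)) =
      cnt u v w (x * y * z * m * a + -1) (x * y * z * m * b + -1) (x * y * z * m * c + -1)
      + cnt u v w i j k - 1
      - m * (x * a + y * b + z * c) * (x * i + y * j + z * k) := by
  have hx := h.hx
  have hy := h.hy
  have hz := h.hz
  obtain ⟨gu, du, su, ru, -⟩ := exists_g h
  obtain ⟨gv, dv, sv, rv, -⟩ := exists_g2 h
  obtain ⟨gw, dw, sw, rw', -⟩ := exists_g3 h
  have := const_aux x y z hx hy hz (-(x + y + z))
    (x * y * z * m * (x * a + y * b + z * c)) (by linarith)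
    (fun i j k => cnt u v w (x * y * z * m * a + (-1 - i)) (x * y * z * m * b + (-1 - j))
        (x * y * z * m * c + (-1 - k))
      - cnt u v w i j k + m * (x * a + y * b + z * c) * (x * i + y * j + z * k))
    ?_ ?_ ?_ i j k hS hi
  · simp only [cnt_zero h, add_zero, mul_zero, sub_zero] at this
    linarith
  · intro i j k hl hh
    have e1 := du i j k (by linarith)
    have e2 := du (x * y * z * m * a + -i) (x * y * z * m * b + (-j - 1))
      (x * y * z * m * c + (-k - 1)) (by linarith)
    rw [su, ru] at e2
    rw [show x * y * z * m * a + -i - 1 = x * y * z * m * a + (-1 - i) by ring,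
      show x * y * z * m * a + -i = x * y * z * m * a + (-1 - (i - 1)) by ring,
      show -j - 1 = -1 - j by ring, show -k - 1 = -1 - k by ring] at e2
    linarith
  · intro i j k hl hh
    have e1 := dv i j k (by linarith)
    have e2 := dv (x * y * z * m * a + (-i - 1)) (x * y * z * m * b + -j)
      (x * y * z * m * c + (-k - 1)) (by linarith)
    rw [sv, rv] at e2
    rw [show x * y * z * m * b + -j - 1 = x * y * z * m * b + (-1 - j) by ring,
      show x * y * z * m * b + -j = x * y * z * m * b + (-1 - (j - 1)) by ring,
      show -i - 1 = -1 - i by ring, show -k - 1 = -1 - k by ring] at e2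
    linarith
  · intro i j k hl hh
    have e1 := dw i j k (by linarith)
    have e2 := dw (x * y * z * m * a + (-i - 1)) (x * y * z * m * b + (-j - 1))
      (x * y * z * m * c + -k) (by linarith)
    rw [sw, rw'] at e2
    rw [show x * y * z * m * c + -k - 1 = x * y * z * m * c + (-1 - k) by ring,
      show x * y * z * m * c + -k = x * y * z * m * c + (-1 - (k - 1)) by ring,
      show -i - 1 = -1 - i by ring, show -j - 1 = -1 - j by ring] at e2
    linarith

lemma R3 {u v w : ℤ × ℤ} {x y z : ℤ} (h : Tri u v w x y z) (m a b c : ℤ)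
    (hm : 0 < m) (hs : 0 < x * a + y * b + z * c) :
    cnt u v w (x * y * z * m * a + -1) (x * y * z * m * b + -1) (x * y * z * m * c + -1) =
      cnt u v w (x * y * z * m * a) (x * y * z * m * b) (x * y * z * m * c)
      - m * (x * a + y * b + z * c) * (x + y + z) := by
  have hx := h.hx
  have hy := h.hy
  have hz := h.hz
  have hM : 0 < x * y * z * m * (x * a + y * b + z * c) := by positivity
  obtain ⟨gu, du, su, ru, u1, -⟩ := exists_g h
  obtain ⟨gv, dv, sv, rv, -, v1⟩ := exists_g2 h
  obtain ⟨gw, dw, sw, rw', w1⟩ := exists_g3 h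
  have e1 := du (x * y * z * m * a + 0) (x * y * z * m * b + 0) (x * y * z * m * c + 0)
    (by linarith)
  have e2 := dv (x * y * z * m * a + -1) (x * y * z * m * b + 0) (x * y * z * m * c + 0)
    (by linarith)
  have e3 := dw (x * y * z * m * a + -1) (x * y * z * m * b + -1) (x * y * z * m * c + 0)
    (by linarith)
  have w2 := rw' 0 0 0
  rw [w1] at w2
  norm_num at w2
  rw [su, u1] at e1
  rw [sv, v1] at e2
  rw [sw, w2] at e3
  simp only [add_zero, sub_eq_add_neg] at e1 e2 e3 ⊢
  linarith

/-- The interior of the triangle. -/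
lemma interior_half (u : ℤ × ℤ) (hu : IsCoprime u.1 u.2) (α : ℝ) :
    interior {a : ℝ × ℝ | dotR (zpt u) a ≤ α} = {a : ℝ × ℝ | dotR (zpt u) a < α} := by
  let f : ℝ × ℝ →ₗ[ℝ] ℝ :=
    { toFun := fun a => dotR (zpt u) a
      map_add' := by intro a b; simp [dotR]; ring
      map_smul' := by intro a b; simp [dotR]; ring }
  have hsurj : Function.Surjective f := by
    intro r
    obtain ⟨e1, e2, he⟩ := hu
    refine ⟨(r * e1, r * e2), ?_⟩
    have he' : (e1 : ℝ) * u.1 + e2 * u.2 = 1 := by exact_mod_cast he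
    simp only [f, dotR, zpt, LinearMap.coe_mk, AddHom.coe_mk]
    linear_combination r * he'
  have ho : IsOpenMap f := f.isOpenMap_of_finiteDimensional hsurj
  have hc : Continuous f := f.continuous_of_finiteDimensional
  have := ho.preimage_interior_eq_interior_preimage hc (Set.Iic α)
  rw [interior_Iic] at this
  exact this.symm

lemma count_eq (u v w : ℤ × ℤ) (S : Set (ℝ × ℝ)) (i j k : ℤ)
    (hS : ∀ m n : ℤ, ((m : ℝ), (n : ℝ)) ∈ S ↔ (m, n) ∈ latSet u v w i j k) :
    ((S ∩ latticePts).ncard : ℤ) = cnt u v w i j k := by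
  have : S ∩ latticePts = zpt '' latSet u v w i j k := by
    ext p
    constructor
    · rintro ⟨h1, m, n, rfl⟩
      exact ⟨(m, n), (hS m n).1 h1, rfl⟩
    · rintro ⟨⟨m, n⟩, h1, rfl⟩
      exact ⟨(hS m n).2 h1, m, n, rfl⟩
  rw [this, cnt, Set.ncard_image_of_injective]
  rintro ⟨p, q⟩ ⟨p', q'⟩ hh
  simpa [zpt] using hh

lemma dot_cast (u : ℤ × ℤ) (m n : ℤ) :
    dotR (zpt u) ((m : ℝ), (n : ℝ)) = ((u.1 * m + u.2 * n : ℤ) : ℝ) := by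
  simp [dotR, zpt]

lemma ehr_eq (u v w : ℤ × ℤ) (α β γ : ℚ) (t : ℕ) (ht : 0 < t) :
    (ehr {a : ℝ × ℝ | dotR (zpt u) a ≤ (α : ℝ) ∧ dotR (zpt v) a ≤ (β : ℝ) ∧
      dotR (zpt w) a ≤ (γ : ℝ)} t : ℤ) = cnt u v w ⌊t * α⌋ ⌊t * β⌋ ⌊t * γ⌋ := by
  have ht' : (0 : ℝ) < t := by exact_mod_cast ht
  unfold ehr
  apply count_eq
  intro m n
  rw [Set.mem_smul_set_iff_inv_smul_mem₀ ht'.ne']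
  have key : ∀ (u : ℤ × ℤ) (α : ℚ), dotR (zpt u) ((t : ℝ)⁻¹ • ((m : ℝ), (n : ℝ))) ≤ (α : ℝ) ↔
      u.1 * m + u.2 * n ≤ ⌊t * α⌋ := by
    intro u α
    have : dotR (zpt u) ((t : ℝ)⁻¹ • ((m : ℝ), (n : ℝ))) =
        (t : ℝ)⁻¹ * ((u.1 * m + u.2 * n : ℤ) : ℝ) := by
      rw [← dot_cast]; simp [dotR]; ring
    rw [this, inv_mul_le_iff₀ ht', Int.le_floor]
    exact_mod_cast Iff.rfl
  simp only [Set.mem_ofPred_eq, latSet, key]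

lemma pip_core {u v w : ℤ × ℤ} {x y z : ℤ} (h : Tri u v w x y z) (α β γ : ℚ)
    (hS0 : 0 < α * x + β * y + γ * z) (P : Polynomial ℚ)
    (hP : ∀ t : ℕ, 0 < t → (cnt u v w ⌊t * α⌋ ⌊t * β⌋ ⌊t * γ⌋ : ℚ) = P.eval (t : ℚ)) :
    ∃ i j k : ℤ, α = i ∧ β = j ∧ γ = k ∧
      (cnt u v w i j k : ℚ) - cnt u v w (i - 1) (j - 1) (k - 1) =
        (α * x + β * y + γ * z) * (x + y + z) / (x * y * z) := by
  have hx := h.hx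
  have hy := h.hy
  have hz := h.hz
  have hxq : (0 : ℚ) < x := by exact_mod_cast hx
  have hyq : (0 : ℚ) < y := by exact_mod_cast hy
  have hzq : (0 : ℚ) < z := by exact_mod_cast hz
  obtain ⟨d, a, b, c, hd, ha, hb, hc⟩ : ∃ (d : ℕ) (a b c : ℤ), 0 < d ∧ (a : ℚ) = d * α ∧
      (b : ℚ) = d * β ∧ (c : ℚ) = d * γ := by
    refine ⟨α.den * β.den * γ.den, α.num * β.den * γ.den, β.num * α.den * γ.den,
      γ.num * α.den * β.den, ?_, ?_, ?_, ?_⟩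
    · have := α.den_pos
      have := β.den_pos
      have := γ.den_pos
      positivity
    · push_cast; rw [← Rat.mul_den_eq_num α]; ring
    · push_cast; rw [← Rat.mul_den_eq_num β]; ring
    · push_cast; rw [← Rat.mul_den_eq_num γ]; ring
  have hdq : (0 : ℚ) < d := by exact_mod_cast hd
  obtain ⟨X, hX⟩ : ∃ X : ℕ, (X : ℤ) = x * y * z :=
    ⟨(x * y * z).toNat, Int.toNat_of_nonneg (by positivity)⟩
  have hXq : (X : ℚ) = x * y * z := by exact_mod_cast hX
  have hXpos : (0 : ℚ) < X := by rw [hXq]; positivity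
  have hXn : 0 < X := by exact_mod_cast hXpos
  set D := d * X with hD
  have hDn : 0 < D := by positivity
  have hDq : (0 : ℚ) < D := by exact_mod_cast hDn
  have hDc : (D : ℚ) = d * X := by simp [hD]
  set S0 := α * x + β * y + γ * z with hS0d
  obtain ⟨s, hs⟩ : ∃ s : ℤ, s = x * a + y * b + z * c := ⟨_, rfl⟩
  have hsq : (s : ℚ) = d * S0 := by rw [hs]; push_cast; rw [ha, hb, hc, hS0d]; ring
  have hspos : 0 < s := by
    have : (0 : ℚ) < s := by rw [hsq]; positivity
    exact_mod_cast this
  have hmul : ∀ (m : ℕ) (α : ℚ) (a : ℤ), (a : ℚ) = d * α →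
      ((D * m : ℕ) : ℚ) * α = ((x * y * z * m * a : ℤ) : ℚ) := by
    intro m α a ha
    push_cast
    rw [hDc, ha, hXq]; ring
  have LD : ∀ m : ℕ, 0 < m → (cnt u v w (x * y * z * m * a) (x * y * z * m * b)
      (x * y * z * m * c) : ℚ) = P.eval ((D : ℚ) * m) := by
    intro m hm
    have := hP (D * m) (by positivity)
    rw [hmul m α a ha, hmul m β b hb, hmul m γ c hc, Int.floor_intCast, Int.floor_intCast,
      Int.floor_intCast] at this
    rw [this]; push_cast; rfl
  have LDt : ∀ m t : ℕ, 0 < m → 0 < t → P.eval ((D : ℚ) * m + t) =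
      P.eval ((D : ℚ) * m) + P.eval (t : ℚ) - 1
        + m * s * (x * ⌊t * α⌋ + y * ⌊t * β⌋ + z * ⌊t * γ⌋) := by
    intro m t hm ht
    have h0 := hP (D * m + t) (by positivity)
    rw [← LD m hm, ← hP t ht]
    have e : ∀ (α : ℚ) (a : ℤ), (a : ℚ) = d * α →
        ⌊((D * m + t : ℕ) : ℚ) * α⌋ = x * y * z * m * a + ⌊t * α⌋ := by
      intro α a ha
      rw [← Int.floor_intCast_add, ← hmul m α a ha]
      push_cast; congr 1; ring
    rw [e α a ha, e β b hb, e γ c hc] at h0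
    have hlow : -(x + y + z) < x * ⌊t * α⌋ + y * ⌊t * β⌋ + z * ⌊t * γ⌋ := by
      have f1 := Int.lt_floor_add_one ((t : ℚ) * α)
      have f2 := Int.lt_floor_add_one ((t : ℚ) * β)
      have f3 := Int.lt_floor_add_one ((t : ℚ) * γ)
      have g1 := mul_lt_mul_of_pos_left f1 hxq
      have g2 := mul_lt_mul_of_pos_left f2 hyq
      have g3 := mul_lt_mul_of_pos_left f3 hzq
      have htq : (0 : ℚ) < t := by exact_mod_cast ht
      have g4 := mul_pos htq hS0
      have : (-(x + y + z) : ℚ) < x * ⌊t * α⌋ + y * ⌊t * β⌋ + z * ⌊t * γ⌋ := by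
        rw [hS0d] at g4
        linarith
      exact_mod_cast this
    have hr := R1 h m a b c ⌊t * α⌋ ⌊t * β⌋ ⌊t * γ⌋ (by positivity) (by rw [← hs]; exact hspos.le)
      hlow
    rw [hr, ← hs] at h0
    push_cast at h0
    rw [← h0]
  set A : ℚ := S0 ^ 2 / (2 * X) with hA
  set e : ℚ := P.eval (D : ℚ) - 1 - A * D ^ 2 with he
  have hquad : ∀ m : ℕ, P.eval ((D : ℚ) * ((m + 1 : ℕ) : ℚ)) =
      1 + (e / D) * (D * ((m + 1 : ℕ) : ℚ)) + A * (D * ((m + 1 : ℕ) : ℚ)) ^ 2 := by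
    intro m
    induction m with
    | zero =>
      simp only [zero_add, Nat.cast_one, mul_one]
      rw [he]; field_simp; ring
    | succ n ih =>
      have := LDt (n + 1) D (by omega) hDn
      have e1 : ∀ (α : ℚ) (a : ℤ), (a : ℚ) = d * α → (⌊(D : ℚ) * α⌋ : ℚ) = X * a := by
        intro α a ha
        have := hmul 1 α a ha
        simp only [mul_one, Nat.cast_one] at this
        rw [this, Int.floor_intCast]
        push_cast
        rw [hXq]
      rw [e1 α a ha, e1 β b hb, e1 γ c hc, ih] at this
      have e2 : (x : ℚ) * (X * a) + y * (X * b) + z * (X * c) = X * s := by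
        rw [hs]; push_cast; ring
      have e3 : (D : ℚ) * ((n + 1 + 1 : ℕ) : ℚ) = D * ((n + 1 : ℕ) : ℚ) + D := by
        push_cast; ring
      have e4 : P.eval (D : ℚ) = 1 + e + A * D ^ 2 := by rw [he]; ring
      rw [e3, this, e2, e4, hsq]
      have e5 : A * 2 * D ^ 2 = (d * S0) * (X * (d * S0)) := by
        rw [hA, hDc]; field_simp
      have e6 : e / D * D = e := by field_simp
      push_cast
      linear_combination (-(n : ℚ) - 1) * e5 - e6
  have hPall : ∀ r : ℚ, P.eval r = 1 + (e / D) * r + A * r ^ 2 := by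
    have : P = Polynomial.C 1 + Polynomial.C (e / D) * Polynomial.X
        + Polynomial.C A * Polynomial.X ^ 2 := by
      apply Polynomial.eq_of_infinite_eval_eq
      apply Set.infinite_of_injective_forall_mem (f := fun m : ℕ => (D : ℚ) * ((m + 1 : ℕ) : ℚ))
      · intro m n hmn
        have := mul_left_cancel₀ hDq.ne' hmn
        have : m + 1 = n + 1 := by exact_mod_cast this
        omega
      · intro m
        simp only [Set.mem_ofPred_eq]
        rw [hquad m]
        simp
    intro r
    rw [this]; simp
  set κ := e / D with hκ
  have hAX : 2 * A * X = S0 ^ 2 := by rw [hA]; field_simp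
  have hAD : 2 * A * D = s * S0 := by
    rw [hDc, hsq]; linear_combination (d : ℚ) * hAX
  have hint : (x : ℚ) * ⌊α⌋ + y * ⌊β⌋ + z * ⌊γ⌋ = S0 := by
    have := LDt 1 1 one_pos one_pos
    simp only [Nat.cast_one, mul_one, one_mul, hPall] at this
    have hsne : (s : ℚ) ≠ 0 := by exact_mod_cast hspos.ne'
    apply mul_left_cancel₀ hsne
    linear_combination hAD - this
  have i1 : α = ⌊α⌋ ∧ β = ⌊β⌋ ∧ γ = ⌊γ⌋ := by
    have f1 := mul_nonneg hxq.le (sub_nonneg.2 (Int.floor_le α))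
    have f2 := mul_nonneg hyq.le (sub_nonneg.2 (Int.floor_le β))
    have f3 := mul_nonneg hzq.le (sub_nonneg.2 (Int.floor_le γ))
    rw [hS0d] at hint
    have g1 : (x : ℚ) * (α - ⌊α⌋) = 0 := by linarith
    have g2 : (y : ℚ) * (β - ⌊β⌋) = 0 := by linarith
    have g3 : (z : ℚ) * (γ - ⌊γ⌋) = 0 := by linarith
    refine ⟨?_, ?_, ?_⟩
    · linarith [(mul_eq_zero.1 g1).resolve_left hxq.ne']
    · linarith [(mul_eq_zero.1 g2).resolve_left hyq.ne']
    · linarith [(mul_eq_zero.1 g3).resolve_left hzq.ne']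
  have hlarge : ∀ W : ℤ, ∃ m : ℕ, 2 ≤ m ∧ W < x * y * z * m * (x * a + y * b + z * c) := by
    intro W
    refine ⟨W.natAbs + 2, by omega, ?_⟩
    rw [← hs, ← hX]
    have h1 : (1 : ℤ) ≤ X := by exact_mod_cast hXn
    have h2 : (1 : ℤ) ≤ s := hspos
    have h3 : W < ((W.natAbs + 2 : ℕ) : ℤ) := by omega
    have h4 : (0 : ℤ) ≤ ((W.natAbs + 2 : ℕ) : ℤ) := by positivity
    nlinarith [mul_le_mul h1 h2 (by norm_num) (by positivity)]
  have hκ2 : 2 * κ = S0 * (x + y + z) / (x * y * z) := by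
    obtain ⟨m, hm2, hm⟩ := hlarge (x * max (x * y * z * 1 * a + -1) 0
      + y * max (x * y * z * 1 * b + -1) 0 + z * max (x * y * z * 1 * c + -1) 0)
    have hpos : 0 < x * y * z * (x * a + y * b + z * c) := by rw [← hs]; positivity
    have r2 := R2 h m a b c (x * y * z * 1 * a + -1) (x * y * z * 1 * b + -1)
      (x * y * z * 1 * c + -1) (by linarith) hm
    have r3 := R3 h m a b c (by omega) (by rw [← hs]; exact hspos)
    have r3' := R3 h 1 a b c (by omega) (by rw [← hs]; exact hspos)
    rw [r3, r3'] at r2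
    obtain ⟨n, rfl⟩ : ∃ n, m = n + 1 := ⟨m - 1, by omega⟩
    have l1 := LD n (by omega)
    have l2 := LD (n + 1) (by omega)
    have l3 := LD 1 one_pos
    rw [hPall] at l1 l2 l3
    have q1 : ∀ a : ℤ, x * y * z * ((n + 1 : ℕ) : ℤ) * a + (-1 - (x * y * z * 1 * a + -1)) =
        x * y * z * (n : ℤ) * a := by
      intro a; push_cast; ring
    rw [q1, q1, q1] at r2
    have r2q := congrArg (fun t : ℤ => (t : ℚ)) r2
    push_cast at r2q l1 l2 l3
    rw [l1, l2, l3] at r2q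
    have hsc : (s : ℚ) = x * a + y * b + z * c := by rw [hs]; push_cast; ring
    have hXs : (x : ℚ) * (x * y * z * 1 * a + -1) + y * (x * y * z * 1 * b + -1)
        + z * (x * y * z * 1 * c + -1) = X * s - (x + y + z) := by
      rw [hXq, hsc]; ring
    rw [hXs, ← hsc] at r2q
    have k1 : 2 * A * D * D = s * (X * s) := by
      rw [hAD, hsq, hDc]; ring
    have k2 : 2 * κ * D = s * (x + y + z) := by
      linear_combination -r2q - ((n : ℚ) + 1) * k1
    rw [← hXq, eq_div_iff hXpos.ne']
    rw [hDc, hsq] at k2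
    apply mul_left_cancel₀ hdq.ne'
    linear_combination k2
  refine ⟨⌊α⌋, ⌊β⌋, ⌊γ⌋, i1.1, i1.2.1, i1.2.2, ?_⟩
  rw [← hκ2]
  have l1 := hP 1 one_pos
  simp only [Nat.cast_one, one_mul, hPall] at l1
  rw [l1]
  obtain ⟨i, hi⟩ : ∃ i, i = ⌊α⌋ := ⟨_, rfl⟩
  obtain ⟨j, hj⟩ : ∃ j, j = ⌊β⌋ := ⟨_, rfl⟩
  obtain ⟨k, hk⟩ : ∃ k, k = ⌊γ⌋ := ⟨_, rfl⟩
  rw [← hi, ← hj, ← hk] at i1 hint ⊢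
  obtain ⟨i1, i2, i3⟩ := i1
  obtain ⟨m, hm2, hm⟩ := hlarge (x * max (i - 1) 0 + y * max (j - 1) 0 + z * max (k - 1) 0)
  have hlow : -(x + y + z) < x * (i - 1) + y * (j - 1) + z * (k - 1) := by
    have : 0 < x * i + y * j + z * k := by
      have : (0 : ℚ) < x * i + y * j + z * k := by rw [hint]; exact hS0
      exact_mod_cast this
    linarith
  have r2 := R2 h m a b c (i - 1) (j - 1) (k - 1) hlow hm
  rw [R3 h m a b c (by omega) (by rw [← hs]; exact hspos)] at r2
  have hDm : 1 ≤ D * m := Nat.mul_pos hDn (by omega)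
  have l3 := hP (D * m - 1) (by
    have : 2 ≤ D * m := by nlinarith
    omega)
  have q : ∀ (α : ℚ) (a i : ℤ), (a : ℚ) = d * α → α = i →
      ⌊((D * m - 1 : ℕ) : ℚ) * α⌋ = x * y * z * (m : ℤ) * a + (-1 - (i - 1)) := by
    intro α a i ha hi
    rw [← Int.floor_intCast (R := ℚ) (x * y * z * (m : ℤ) * a + (-1 - (i - 1)))]
    congr 1
    rw [Int.cast_add, ← hmul m α a ha, Nat.cast_sub hDm]
    push_cast
    rw [← hi]; ring
  rw [q α a i ha i1, q β b j hb i2, q γ c k hc i3, r2, hPall, Nat.cast_sub hDm] at l3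
  push_cast at l3
  have l2 := LD m (by omega)
  rw [l2, hPall] at l3
  have hsc : (s : ℚ) = x * a + y * b + z * c := by rw [hs]; push_cast; ring
  rw [← hsc] at l3
  linear_combination -l3 + (m : ℚ) * hAD - (m : ℚ) * s * hint
/-- for a rational triangle
`T = {a : ⟨u,a⟩ ≤ α, ⟨v,a⟩ ≤ β, ⟨w,a⟩ ≤ γ}` with primitive outer edge normals
`u, v, w` and `x = det(v,w)`, `y = det(w,u)`, `z = det(u,v)` all positive, if
`T` is pseudointegral then the number of boundary lattice points of `T` equals
`(αx + βy + γz)(x + y + z)/(xyz)`. -/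
theorem stmt_16 (u v w : ℤ × ℤ)
    (hu : IsCoprime u.1 u.2) (hv : IsCoprime v.1 v.2) (hw : IsCoprime w.1 w.2)
    (x y z : ℤ)
    (hxd : x = v.1 * w.2 - v.2 * w.1)
    (hyd : y = w.1 * u.2 - w.2 * u.1)
    (hzd : z = u.1 * v.2 - u.2 * v.1)
    (hx : 0 < x) (hy : 0 < y) (hz : 0 < z)
    (α β γ : ℚ) (T : Set (ℝ × ℝ))
    (hT : T = {a : ℝ × ℝ | dotR (zpt u) a ≤ (α : ℝ) ∧ dotR (zpt v) a ≤ (β : ℝ) ∧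
      dotR (zpt w) a ≤ (γ : ℝ)})
    (hne : (interior T).Nonempty)
    (hPIP : IsPIP T) :
    ((frontier T ∩ latticePts).ncard : ℚ) =
      ((α * (x : ℚ) + β * (y : ℚ) + γ * (z : ℚ)) * ((x : ℚ) + (y : ℚ) + (z : ℚ))) /
        ((x : ℚ) * (y : ℚ) * (z : ℚ)) := by
  have h : Tri u v w x y z := ⟨hu, hv, hw, hxd, hyd, hzd, hx, hy, hz⟩
  have hint : interior T = {a : ℝ × ℝ | dotR (zpt u) a < (α : ℝ) ∧ dotR (zpt v) a < (β : ℝ) ∧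
      dotR (zpt w) a < (γ : ℝ)} := by
    have : T = {a : ℝ × ℝ | dotR (zpt u) a ≤ (α : ℝ)} ∩ ({a : ℝ × ℝ | dotR (zpt v) a ≤ (β : ℝ)} ∩
      {a : ℝ × ℝ | dotR (zpt w) a ≤ (γ : ℝ)}) := hT
    rw [this, interior_inter, interior_inter, interior_half u hu, interior_half v hv,
      interior_half w hw]
    rfl
  have hclosed : IsClosed T := by
    have hc : ∀ u : ℤ × ℤ, Continuous (fun a => dotR (zpt u) a) := by
      intro u; unfold dotR; fun_prop
    rw [hT]
    exact (isClosed_le (hc u) continuous_const).inter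
      ((isClosed_le (hc v) continuous_const).inter (isClosed_le (hc w) continuous_const))
  have hS0 : 0 < α * x + β * y + γ * z := by
    obtain ⟨p, hp⟩ := hne
    rw [hint] at hp
    obtain ⟨h1, h2, h3⟩ := hp
    have hxr : (0 : ℝ) < x := by exact_mod_cast hx
    have hyr : (0 : ℝ) < y := by exact_mod_cast hy
    have hzr : (0 : ℝ) < z := by exact_mod_cast hz
    have g1 := mul_lt_mul_of_pos_left h1 hxr
    have g2 := mul_lt_mul_of_pos_left h2 hyr
    have g3 := mul_lt_mul_of_pos_left h3 hzr
    have g4 : (x : ℝ) * dotR (zpt u) p + y * dotR (zpt v) p + z * dotR (zpt w) p = 0 := by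
      rw [hxd, hyd, hzd]; simp only [dotR, zpt]; push_cast; ring
    have : (0 : ℝ) < α * x + β * y + γ * z := by linarith
    exact_mod_cast this
  obtain ⟨P, hP⟩ := hPIP
  have hP' : ∀ t : ℕ, 0 < t →
      (cnt u v w ⌊t * α⌋ ⌊t * β⌋ ⌊t * γ⌋ : ℚ) = P.eval (t : ℚ) := by
    intro t ht
    rw [← hP t ht, hT, ← ehr_eq u v w α β γ t ht]
    simp
  obtain ⟨i, j, k, hi, hj, hk, hfin⟩ := pip_core h α β γ hS0 P hP'
  rw [← hfin]
  have c1 : ((T ∩ latticePts).ncard : ℤ) = cnt u v w i j k := by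
    apply count_eq
    intro m n
    rw [hT, hi, hj, hk]
    simp only [Set.mem_ofPred_eq, latSet, dot_cast, Rat.cast_intCast, Int.cast_le]
  have c2 : ((interior T ∩ latticePts).ncard : ℤ) = cnt u v w (i - 1) (j - 1) (k - 1) := by
    apply count_eq
    intro m n
    rw [hint, hi, hj, hk]
    simp only [Set.mem_ofPred_eq, latSet, dot_cast, Rat.cast_intCast, Int.cast_lt,
      Int.le_sub_one_iff]
  have hfinite : (T ∩ latticePts).Finite := by
    have : T ∩ latticePts ⊆ zpt '' latSet u v w i j k := by
      rintro _ ⟨h1, m, n, rfl⟩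
      refine ⟨(m, n), ?_, rfl⟩
      rw [hT, hi, hj, hk] at h1
      simpa only [Set.mem_ofPred_eq, latSet, dot_cast, Rat.cast_intCast, Int.cast_le] using h1
    exact ((latSet_finite h i j k).image _).subset this
  have hfr : frontier T ∩ latticePts = (T ∩ latticePts) \ (interior T ∩ latticePts) := by
    rw [hclosed.frontier_eq]
    ext p
    simp only [Set.mem_inter_iff, Set.mem_sdiff]
    tauto
  have hsub : interior T ∩ latticePts ⊆ T ∩ latticePts :=
    Set.inter_subset_inter_left _ interior_subset
  have hcard := Set.ncard_sdiff_add_ncard_of_subset hsub hfinite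
  rw [← hfr] at hcard
  have hcz : ((frontier T ∩ latticePts).ncard : ℤ) =
      cnt u v w i j k - cnt u v w (i - 1) (j - 1) (k - 1) := by
    rw [← c1, ← c2, ← hcard]; push_cast; ring
  exact_mod_cast hcz
end
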